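/- arXiv:2603.21538 — 4 statements merged into one kernel-verified Lean document; each statement's English description precedes it below -/
import Mathlib

section
/- Let H be one of the graphs odd torch (any odd torch) or 4K1, and let G be a (bull, H)-free graph. Then χ(G) ≤ (ω(G)+1 choose 2), i.e., the chromatic number of G is at most ω(G)(ω(G)+1)/2. -/
/-!
The bound follows from perfect weight divisibility: for all positive vertex weights, every nonempty
vertex set `T` has a subset `P` inducing a perfect graph such that the largest weight of a clique
drops when `P` is deleted from `T` (`weight_divisible`). With unit weights, `P` takes `ω` colours
and the rest takes `ω choose 2` colours by induction, which gives `(ω + 1) choose 2`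
(`colOn_choose`).

If `G[T]` has a homogeneous set `Y`, contract `Y` to one vertex whose weight is the largest weight
of a clique of `Y`; a perfect part of the contracted graph that uses this vertex is expanded by a
perfect part of `Y`, and stays perfect by Lovász's substitution lemma (`substitution`, proved
through `replication`). If `G[T]` is prime, it has a vertex `v` whose non-neighbours induce a
perfect graph (`exists_perf_nonNbrs`), and `P` consists of `v` and its non-neighbours: what remains
is complete to `v`, so every clique in it extends by `v`.

To find `v`, suppose that the non-neighbours of `v` in a prime bull-free `G[T]` contain a minimally
imperfect set `F`. Such an `F` is prime and not split. A vertex of `T` complete to `F` (a centre)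
cannot coexist with `v`, which is anticomplete to `F` (`no_center_anticenter`); the argument uses
that bull-free prime graphs are closed under complementation. Since the set of vertices of `T` that
are not anticomplete to `F` is not a module, there is an edge `a u` with `a` anticomplete to `F`
and `u` having some, but not all, neighbours in `F`, and as `G` has no bull, the neighbours of `u`
in `F` form a stable set (`exists_attach`, `stable_or_complete`). Minimal imperfection then forces
`F` to be an odd hole (`no_stable_attach`), without any appeal to the strong perfect graph theorem,
and `F ∪ {u, a}` induces an odd torch. This settles the odd-torch-free case.

Without `4K₁` the odd hole is a pentagon. Assuming that the non-neighbours of every vertex contain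
such a pentagon, the pentagon of `v` has `v` as its only anticentre, every neighbour of `v` has
exactly one neighbour on it, and therefore the neighbours of `v` form a clique. Looking from a
neighbour `u` of `v`, the pentagon of `u` contains a neighbour of `v` that is not adjacent to `u`,
a contradiction.
-/

open SimpleGraph

/-- `H` is isomorphic to an induced subgraph of `G`. -/
def ContainsInduced {α β : Type*} (G : SimpleGraph α) (H : SimpleGraph β) : Prop :=
  ∃ f : β ↪ α, ∀ a b, G.Adj (f a) (f b) ↔ H.Adj a b

/-- `G` is `H`-free: `G` does not contain `H` as an induced subgraph. -/
def IsFree {α β : Type*} (G : SimpleGraph α) (H : SimpleGraph β) : Prop :=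
  ¬ ContainsInduced G H

/-- The clique number of the subgraph of `G` induced on `s`. -/
noncomputable def cliqueNumOn {V : Type*} (G : SimpleGraph V) (s : Set V) : ℕ :=
  sSup {n | ∃ t : Finset V, ↑t ⊆ s ∧ G.IsNClique n t}

/-- The maximum `w`-weight of a clique of `G` contained in `s`. -/
noncomputable def wCliqueNumOn {V : Type*} (G : SimpleGraph V) (w : V → ℕ) (s : Set V) : ℕ :=
  sSup {n | ∃ t : Finset V, ↑t ⊆ s ∧ G.IsClique (↑t : Set V) ∧ ∑ v ∈ t, w v = n}

/-- A graph is perfect if every induced subgraph has chromatic number equal to clique number. -/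
def IsPerfect {V : Type*} (G : SimpleGraph V) : Prop :=
  ∀ s : Set V, (G.induce s).chromaticNumber = (cliqueNumOn G s : ℕ∞)

/-- `G` is perfectly divisible: every (nonempty) induced subgraph `H` of `G` admits a partition
`(A, B)` of its vertex set with `H[A]` perfect and `ω(H[B]) < ω(H)`. -/
def PerfectlyDivisible {V : Type*} (G : SimpleGraph V) : Prop :=
  ∀ s : Set V, s.Nonempty →
    ∃ A B : Set V, A ∪ B = s ∧ A ∩ B = ∅ ∧
      IsPerfect (G.induce A) ∧ cliqueNumOn G B < cliqueNumOn G s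

/-- `G` is perfectly weight divisible: for every positive integer weight function `w` and every
(nonempty) induced subgraph `H` of `G`, there is a partition `(P, W)` of its vertex set with
`H[P]` perfect and the maximum weight of a clique of `H[W]` less than that of `H`. -/
def PerfectlyWeightDivisible {V : Type*} (G : SimpleGraph V) : Prop :=
  ∀ w : V → ℕ, (∀ v, 0 < w v) →
    ∀ s : Set V, s.Nonempty →
      ∃ P W : Set V, P ∪ W = s ∧ P ∩ W = ∅ ∧
        IsPerfect (G.induce P) ∧ wCliqueNumOn G w W < wCliqueNumOn G w s

/-- The bull: a triangle `{0,1,2}` with pendant edges `0-3` and `1-4`. -/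
def bull : SimpleGraph (Fin 5) :=
  SimpleGraph.fromEdgeSet {s(0,1), s(0,2), s(1,2), s(0,3), s(1,4)}

/-- The house: the complement of the path on 5 vertices. -/
def house : SimpleGraph (Fin 5) := (SimpleGraph.pathGraph 5)ᶜ

/-- The hammer: a triangle `{0,1,2}` together with the path `2-3-4`. -/
def hammer : SimpleGraph (Fin 5) :=
  SimpleGraph.fromEdgeSet {s(0,1), s(0,2), s(1,2), s(2,3), s(3,4)}

/-- The diamond: `K₄` minus an edge. -/
def diamond : SimpleGraph (Fin 4) :=
  SimpleGraph.fromEdgeSet {s(0,1), s(0,2), s(0,3), s(1,2), s(1,3)}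

/-- The odd torch built on the cycle `C_k` from a set `S` of cycle vertices: two new adjacent
vertices are added, the first adjacent exactly to `S`, the second to no cycle vertex. -/
def oddTorch (k : ℕ) (S : Set (Fin k)) : SimpleGraph (Fin k ⊕ Fin 2) :=
  SimpleGraph.fromRel (fun a b =>
    match a, b with
    | Sum.inl i, Sum.inl j => (SimpleGraph.cycleGraph k).Adj i j
    | Sum.inl i, Sum.inr u => u = 0 ∧ i ∈ S
    | Sum.inr _, Sum.inl _ => False
    | Sum.inr u, Sum.inr v => u ≠ v)

/-- `G` contains no odd torch as an induced subgraph. -/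
def OddTorchFree {V : Type*} (G : SimpleGraph V) : Prop :=
  ∀ (k : ℕ) (S : Set (Fin k)), 5 ≤ k → Odd k → S.Nonempty →
    (∀ i ∈ S, ∀ j ∈ S, ¬ (SimpleGraph.cycleGraph k).Adj i j) →
    IsFree G (oddTorch k S)

/-- `G` is locally perfect: the neighbourhood of each vertex induces a perfect graph. -/
def LocallyPerfect {V : Type*} (G : SimpleGraph V) : Prop :=
  ∀ v : V, IsPerfect (G.induce (G.neighborSet v))

/-- `N(X)`: vertices outside `X` with a neighbour in `X`. -/
def nbhd {V : Type*} (G : SimpleGraph V) (X : Set V) : Set V :=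
  {u | u ∉ X ∧ ∃ x ∈ X, G.Adj u x}

/-- `M(X) = V(G) \ (X ∪ N(X))`: vertices outside `X` with no neighbour in `X`. -/
def antiNbhd {V : Type*} (G : SimpleGraph V) (X : Set V) : Set V :=
  {u | u ∉ X ∧ ∀ x ∈ X, ¬ G.Adj u x}

/-- Minimally non-perfectly divisible. -/
def MNPD {V : Type*} (G : SimpleGraph V) : Prop :=
  ¬ PerfectlyDivisible G ∧ ∀ s : Set V, s ≠ Set.univ → PerfectlyDivisible (G.induce s)

/-- Minimally non-perfectly weight divisible. -/
def MNWD {V : Type*} (G : SimpleGraph V) : Prop :=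
  ¬ PerfectlyWeightDivisible G ∧ ∀ s : Set V, s ≠ Set.univ → PerfectlyWeightDivisible (G.induce s)


namespace BullBound

set_option linter.unusedSectionVars false

variable {V : Type*} [DecidableEq V]

/-! ### Basic notions, relative to a finite vertex set of an ambient graph -/

/-- `G` has no induced bull; the triangle is `p q r` and the pendant edges are `x p` and `y q`.
Distinctness of the five vertices follows from the adjacencies. -/
def NoBull (G : SimpleGraph V) : Prop :=
  ∀ p q r x y : V, G.Adj p q → G.Adj p r → G.Adj q r → G.Adj x p → G.Adj y q →
    ¬ G.Adj x q → ¬ G.Adj x r → ¬ G.Adj y p → ¬ G.Adj y r → ¬ G.Adj x y → False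

/-- Every clique of `G[T]` has at most `k` vertices. -/
def CliqueLE (G : SimpleGraph V) (T : Finset V) (k : ℕ) : Prop :=
  ∀ Q : Finset V, Q ⊆ T → G.IsClique (Q : Set V) → Q.card ≤ k

/-- `G[T]` is `k`-colourable. -/
def ColOn (G : SimpleGraph V) (T : Finset V) (k : ℕ) : Prop :=
  ∃ f : V → ℕ, (∀ v ∈ T, f v < k) ∧ ∀ x ∈ T, ∀ y ∈ T, G.Adj x y → f x ≠ f y

/-- `G[T]` is perfect. -/
def Perf (G : SimpleGraph V) (T : Finset V) : Prop :=
  ∀ T' : Finset V, T' ⊆ T → ∀ k, CliqueLE G T' k → ColOn G T' k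

/-- `G[F]` is minimally imperfect. -/
def MinImp (G : SimpleGraph V) (F : Finset V) : Prop :=
  ¬ Perf G F ∧ ∀ S : Finset V, S ⊂ F → Perf G S

/-- Every clique of `G[T]` has `w`-weight at most `k`. -/
def WLE (G : SimpleGraph V) (w : V → ℕ) (T : Finset V) (k : ℕ) : Prop :=
  ∀ Q : Finset V, Q ⊆ T → G.IsClique (Q : Set V) → ∑ v ∈ Q, w v ≤ k

/-- `Y` is a module of `G[T]`: no vertex of `T` outside `Y` distinguishes two vertices of `Y`. -/
def IsMod (G : SimpleGraph V) (T Y : Finset V) : Prop :=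
  Y ⊆ T ∧ ∀ z ∈ T, z ∉ Y → (∀ y ∈ Y, G.Adj z y) ∨ (∀ y ∈ Y, ¬ G.Adj z y)

/-- `G[T]` has no homogeneous set. -/
def PrimeOn (G : SimpleGraph V) (T : Finset V) : Prop :=
  ∀ Y : Finset V, IsMod G T Y → 2 ≤ Y.card → Y = T

/-- `G[F]` is not a split graph. -/
def NonSplit (G : SimpleGraph V) (F : Finset V) : Prop :=
  ∀ I Q : Finset V, F ⊆ I ∪ Q → G.IsClique (Q : Set V) →
    (∀ x ∈ I, ∀ y ∈ I, ¬ G.Adj x y) → False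

/-- `c` lists the vertices of an odd hole of `G[F]` in cyclic order. -/
def IsOddHole (G : SimpleGraph V) (F : Finset V) (k : ℕ) (c : Fin k → V) : Prop :=
  5 ≤ k ∧ Odd k ∧ Function.Injective c ∧ (∀ i, c i ∈ F) ∧
    ∀ i j, G.Adj (c i) (c j) ↔ (cycleGraph k).Adj i j

lemma Perf.mono {G : SimpleGraph V} {T T' : Finset V} (h : Perf G T) (hs : T' ⊆ T) :
    Perf G T' := fun S hS k hk => h S (hS.trans hs) k hk

lemma ColOn.mono {G : SimpleGraph V} {T T' : Finset V} {k : ℕ} (h : ColOn G T k) (hs : T' ⊆ T) :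
    ColOn G T' k := by
  obtain ⟨f, h1, h2⟩ := h
  exact ⟨f, fun v hv => h1 v (hs hv), fun x hx y hy => h2 x (hs hx) y (hs hy)⟩

lemma CliqueLE.mono {G : SimpleGraph V} {T T' : Finset V} {k : ℕ} (h : CliqueLE G T k)
    (hs : T' ⊆ T) : CliqueLE G T' k := fun Q hQ hc => h Q (hQ.trans hs) hc

lemma WLE.mono {G : SimpleGraph V} {w : V → ℕ} {T T' : Finset V} {k : ℕ} (h : WLE G w T k)
    (hs : T' ⊆ T) : WLE G w T' k := fun Q hQ hc => h Q (hQ.trans hs) hc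

lemma MinImp.fails {G : SimpleGraph V} {F : Finset V} (h : MinImp G F) :
    ∃ k, CliqueLE G F k ∧ ¬ ColOn G F k := by
  by_contra! hcon
  refine h.1 fun T hT k hk => ?_
  rcases eq_or_ne T F with rfl | hne
  · exact hcon k hk
  · exact h.2 T (Finset.ssubset_iff_subset_ne.2 ⟨hT, hne⟩) T subset_rfl k hk

lemma exists_minImp {G : SimpleGraph V} (T : Finset V) (h : ¬ Perf G T) :
    ∃ F ⊆ T, MinImp G F := by
  induction T using Finset.strongInduction with
  | H T ih =>
    by_cases hT : ∀ F' ⊂ T, Perf G F'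
    · exact ⟨T, subset_rfl, h, hT⟩
    · push Not at hT
      obtain ⟨F', h1, h2⟩ := hT
      obtain ⟨F, h3, h4⟩ := ih F' h1 h2
      exact ⟨F, h3.trans h1.1, h4⟩

/-- The connected component of `q` in `G[A]`, described by closure and an induction principle. -/
lemma exists_comp (G : SimpleGraph V) (A : Finset V) (q : V) (hq : q ∈ A) :
    ∃ K ⊆ A, q ∈ K ∧ (∀ x ∈ K, ∀ y ∈ A, G.Adj x y → y ∈ K) ∧
      ∀ P : V → Prop, (∀ x ∈ K, ∀ y ∈ K, G.Adj x y → P x → P y) →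
        (∃ x ∈ K, P x) → ∀ y ∈ K, P y := by
  classical
  let R : V → V → Prop := fun x y => x ∈ A ∧ y ∈ A ∧ G.Adj x y
  have hsymm : ∀ x y, Relation.ReflTransGen R x y → Relation.ReflTransGen R y x := by
    intro x y h
    induction h with
    | refl => exact .refl
    | tail _ h2 ih => exact .head ⟨h2.2.1, h2.1, h2.2.2.symm⟩ ih
  refine ⟨A.filter fun x => Relation.ReflTransGen R q x, Finset.filter_subset _ _, ?_, ?_, ?_⟩
  · simp [hq, Relation.ReflTransGen.refl]
  · intro x hx y hy hxy
    simp only [Finset.mem_filter] at hx ⊢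
    exact ⟨hy, hx.2.tail ⟨hx.1, hy, hxy⟩⟩
  · rintro P hP ⟨x, hx, hPx⟩ y hy
    simp only [Finset.mem_filter] at hx hy hP
    have hxy : Relation.ReflTransGen R x y := (hsymm _ _ hx.2).trans hy.2
    have key : Relation.ReflTransGen R q y ∧ P y := by
      clear hy
      induction hxy with
      | refl => exact ⟨hx.2, hPx⟩
      | tail _ h2 ih =>
        refine ⟨ih.1.tail h2, hP _ ⟨h2.1, ih.1⟩ _ ⟨h2.2.1, ih.1.tail h2⟩ h2.2.2 ih.2⟩
    exact key.2

lemma clique_insert {G : SimpleGraph V} {Q : Finset V} {a : V}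
    (hQ : G.IsClique (Q : Set V)) (h : ∀ x ∈ Q, x ≠ a → G.Adj a x) :
    G.IsClique ((insert a Q : Finset V) : Set V) := by
  rw [Finset.coe_insert, SimpleGraph.isClique_insert]
  exact ⟨hQ, fun b hb hab => h b hb hab.symm⟩

/-! ### Lovász replication and substitution -/

/-- A perfect graph has, for every weight function, a multicolouring with as many colours as the
largest weight of a clique. -/
lemma replication {G : SimpleGraph V} {T : Finset V} (hT : Perf G T) (w : V → ℕ) (k : ℕ)
    (hk : WLE G w T k) :
    ∃ f : V → Finset ℕ, (∀ v ∈ T, (f v).card = w v ∧ f v ⊆ Finset.range k) ∧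
      ∀ x ∈ T, ∀ y ∈ T, G.Adj x y → Disjoint (f x) (f y) := by
  classical
  induction hn : ∑ v ∈ T, w v using Nat.strong_induction_on generalizing w k with
  | _ n ih =>
  by_cases hw : ∀ v ∈ T, w v ≤ 1
  · -- on the support all weights are one, and an ordinary colouring suffices
    have hcl : CliqueLE G (T.filter fun v => w v = 1) k := by
      intro Q hQ hc
      have := hk Q (hQ.trans (Finset.filter_subset _ _)) hc
      rwa [Finset.sum_congr rfl (fun v hv => (Finset.mem_filter.1 (hQ hv)).2),
        Finset.sum_const, smul_eq_mul, mul_one] at this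
    obtain ⟨f, hf1, hf2⟩ := hT _ (Finset.filter_subset _ _) k hcl
    refine ⟨fun v => if w v = 1 then {f v} else ∅, ?_, ?_⟩
    · intro v hv
      by_cases h1 : w v = 1
      · simp [h1, hf1 v (by simp [hv, h1])]
      · have := hw v hv
        simp [h1]; omega
    · intro x hx y hy hxy
      by_cases h1 : w x = 1
      · by_cases h2 : w y = 1
        · simp only [h1, h2, if_true, Finset.disjoint_singleton]
          exact hf2 x (by simp [hx, h1]) y (by simp [hy, h2]) hxy
        · simp [h2]
      · simp [h1]
  push Not at hw
  obtain ⟨x, hxT, hx⟩ := hw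
  -- lower the weight at `x` by one; `m` is the resulting clique weight
  set w1 : V → ℕ := Function.update w x (w x - 1) with hw1
  have hw1x : w1 x = w x - 1 := by simp [hw1]
  have hw1n : ∀ v, v ≠ x → w1 v = w v := fun v hv => by simp [hw1, hv]
  have hw1le : ∀ v, w1 v ≤ w v := by
    intro v; by_cases hv : v = x
    · subst hv; omega
    · rw [hw1n v hv]
  have hsum1 : ∑ v ∈ T, w1 v < n := by
    rw [← hn]
    exact Finset.sum_lt_sum (fun v _ => hw1le v) ⟨x, hxT, by omega⟩
  have sum_x : ∀ Q : Finset V, x ∈ Q → ∑ v ∈ Q, w v = ∑ v ∈ Q, w1 v + 1 := by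
    intro Q hQ
    have h1 := Finset.add_sum_erase Q w hQ
    have h2 := Finset.add_sum_erase Q w1 hQ
    have h3 : ∑ v ∈ Q.erase x, w1 v = ∑ v ∈ Q.erase x, w v :=
      Finset.sum_congr rfl fun v hv => hw1n v (Finset.ne_of_mem_erase hv)
    omega
  have hk1 : WLE G w1 T k := fun Q hQ hc => (Finset.sum_le_sum fun v _ => hw1le v).trans (hk Q hQ hc)
  by_cases hlow : WLE G w1 T (k - 1)
  · -- a new colour for `x`
    have hkpos : 1 ≤ k := by
      have := hk {x} (by simpa using hxT) (by simp)
      simp at this; omega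
    obtain ⟨f, hf1, hf2⟩ := ih _ hsum1 w1 (k - 1) hlow rfl
    have hnot : ∀ v ∈ T, k - 1 ∉ f v := fun v hv h => by
      have := (hf1 v hv).2 h
      simp at this
    refine ⟨Function.update f x (insert (k - 1) (f x)), ?_, ?_⟩
    · intro v hv
      have hsub : f v ⊆ Finset.range k := (hf1 v hv).2.trans (Finset.range_mono (by omega))
      by_cases hvx : v = x
      · subst hvx
        rw [Function.update_self, Finset.card_insert_of_notMem (hnot v hv), (hf1 v hv).1]
        refine ⟨by omega, ?_⟩
        rw [Finset.insert_subset_iff]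
        exact ⟨by simp; omega, hsub⟩
      · rw [Function.update_of_ne hvx, (hf1 v hv).1]
        exact ⟨hw1n v hvx, hsub⟩
    · intro a ha b hb hab
      by_cases hax : a = x
      · subst hax
        rw [Function.update_self, Function.update_of_ne hab.ne', Finset.disjoint_insert_left]
        exact ⟨hnot b hb, hf2 a ha b hb hab⟩
      · by_cases hbx : b = x
        · subst hbx
          rw [Function.update_self, Function.update_of_ne hax, Finset.disjoint_insert_right]
          exact ⟨hnot a ha, hf2 a ha b hb hab⟩
        · rw [Function.update_of_ne hax, Function.update_of_ne hbx]
          exact hf2 a ha b hb hab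
  · obtain ⟨f, hf1, hf2⟩ := ih _ hsum1 w1 k hk1 rfl
    obtain ⟨c, hc⟩ : (f x).Nonempty := by
      rw [← Finset.card_pos, (hf1 x hxT).1]; omega
    -- remove the colour class of `c`, except at `x`
    set w2 : V → ℕ := fun v => if v ≠ x ∧ c ∈ f v then w1 v - 1 else w1 v with hw2
    have hw2le : ∀ v, w2 v ≤ w1 v := by intro v; simp only [hw2]; split_ifs <;> omega
    have hck : c < k := by simpa using (hf1 x hxT).2 hc
    have hk2 : WLE G w2 T (k - 1) := by
      intro Q hQ hQc
      by_contra! hgt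
      have h1 := hk1 Q hQ hQc
      have h2 := Finset.sum_le_sum (s := Q) fun v _ => hw2le v
      have hxQ : x ∉ Q := by
        intro hxQ
        have h3 := hk Q hQ hQc
        rw [sum_x Q hxQ] at h3
        omega
      -- a clique of weight `k` uses every colour
      have hall : Q.biUnion f = Finset.range k := by
        apply Finset.eq_of_subset_of_card_le
        · exact Finset.biUnion_subset.2 fun v hv => (hf1 v (hQ hv)).2
        · have hsum : ∑ v ∈ Q, (f v).card = ∑ v ∈ Q, w1 v :=
            Finset.sum_congr rfl fun v hv => (hf1 v (hQ hv)).1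
          rw [Finset.card_biUnion, Finset.card_range, hsum]
          · omega
          · intro a ha b hb hab
            exact hf2 a (hQ ha) b (hQ hb) (hQc ha hb hab)
      have hcQ : c ∈ Q.biUnion f := by rw [hall]; simpa using hck
      obtain ⟨v, hv, hcv⟩ := Finset.mem_biUnion.1 hcQ
      have hvx : v ≠ x := fun h => hxQ (h ▸ hv)
      have hpos : 1 ≤ w1 v := by
        rw [← (hf1 v (hQ hv)).1]; exact Finset.card_pos.2 ⟨c, hcv⟩
      have : ∑ v ∈ Q, w2 v < ∑ v ∈ Q, w1 v := by
        refine Finset.sum_lt_sum (fun v _ => hw2le v) ⟨v, hv, ?_⟩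
        simp only [hw2]; rw [if_pos ⟨hvx, hcv⟩]; omega
      omega
    have hsum2 : ∑ v ∈ T, w2 v < n := (Finset.sum_le_sum fun v _ => hw2le v).trans_lt hsum1
    obtain ⟨g, hg1, hg2⟩ := ih _ hsum2 w2 (k - 1) hk2 rfl
    have hnot : ∀ v ∈ T, k - 1 ∉ g v := fun v hv h => by
      have := (hg1 v hv).2 h
      simp at this
    refine ⟨fun v => if c ∈ f v then insert (k - 1) (g v) else g v, ?_, ?_⟩
    · intro v hv
      have hsub : g v ⊆ Finset.range k := (hg1 v hv).2.trans (Finset.range_mono (by omega))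
      by_cases hcv : c ∈ f v
      · have hpos : 1 ≤ w1 v := by
          rw [← (hf1 v hv).1]; exact Finset.card_pos.2 ⟨c, hcv⟩
        simp only [hcv, if_true]
        rw [Finset.card_insert_of_notMem (hnot v hv), (hg1 v hv).1, Finset.insert_subset_iff]
        refine ⟨?_, by simp; omega, hsub⟩
        by_cases hvx : v = x
        · subst hvx; simp only [hw2]; rw [if_neg (by simp)]; omega
        · simp only [hw2]; rw [if_pos ⟨hvx, hcv⟩, ← hw1n v hvx]; omega
      · simp only [hcv, if_false]
        refine ⟨?_, hsub⟩
        have hvx : v ≠ x := fun h => hcv (h ▸ hc)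
        rw [(hg1 v hv).1]; simp only [hw2]; rw [if_neg (by simp [hcv]), hw1n v hvx]
    · intro a ha b hb hab
      have hd := hf2 a ha b hb hab
      have hg := hg2 a ha b hb hab
      by_cases hca : c ∈ f a
      · have hcb : c ∉ f b := Finset.disjoint_left.1 hd hca
        simp only [hca, hcb, if_true, if_false, Finset.disjoint_insert_left]
        exact ⟨hnot b hb, hg⟩
      · by_cases hcb : c ∈ f b
        · simp only [hca, hcb, if_true, if_false, Finset.disjoint_insert_right]
          exact ⟨hnot a ha, hg⟩
        · simpa only [hca, hcb, if_false] using hg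

lemma exists_max_clique (G : SimpleGraph V) (w : V → ℕ) (T : Finset V) :
    ∃ R ⊆ T, G.IsClique (R : Set V) ∧ WLE G w T (∑ v ∈ R, w v) := by
  classical
  obtain ⟨R, hR, hmax⟩ := Finset.exists_max_image
    (T.powerset.filter fun Q : Finset V => G.IsClique (Q : Set V)) (fun Q => ∑ v ∈ Q, w v)
    ⟨∅, by simp⟩
  simp only [Finset.mem_filter, Finset.mem_powerset] at hR hmax
  exact ⟨R, hR.1, hR.2, fun Q hQ hc => hmax Q ⟨hQ, hc⟩⟩

lemma wle_one {G : SimpleGraph V} {T : Finset V} {k : ℕ} :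
    WLE G (fun _ => 1) T k ↔ CliqueLE G T k := by
  simp [WLE, CliqueLE]

/-- Substituting a perfect graph `Z` for the vertex `y` of a perfect graph `P` gives a perfect
graph. -/
lemma substitution {G : SimpleGraph V} {P Z : Finset V} {y : V} (hP : Perf G P) (hy : y ∈ P)
    (hZ : Perf G Z)
    (hhom : ∀ p ∈ P, p ≠ y → ∀ z ∈ Z, G.Adj p z ↔ G.Adj p y) :
    Perf G (P.erase y ∪ Z) := by
  classical
  intro T hT k hk
  have hTP : ∀ v ∈ T, v ∉ Z → v ∈ P ∧ v ≠ y := by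
    intro v hv hvZ
    have := hT hv
    simp only [Finset.mem_union, Finset.mem_erase] at this
    tauto
  obtain ⟨R, hRT, hRc, hRmax⟩ := exists_max_clique G (fun _ => 1) (T ∩ Z)
  set m := R.card with hm
  simp only [Finset.sum_const, smul_eq_mul, mul_one, ← hm] at hRmax
  set w : V → ℕ := fun v => if v = y then m else if v ∈ T ∧ v ∉ Z then 1 else 0 with hw
  have hwy : w y = m := by simp [hw]
  have hwo : ∀ v, v ≠ y → w v = if v ∈ T ∧ v ∉ Z then 1 else 0 := fun v hv => by simp [hw, hv]
  have hwle : WLE G w P k := by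
    intro Q hQ hQc
    set Q1 := (Q.erase y).filter fun v => v ∈ T ∧ v ∉ Z with hQ1
    have hQ1m : ∀ v ∈ Q1, v ∈ Q ∧ v ≠ y ∧ v ∈ T ∧ v ∉ Z := by
      intro v hv; simp only [hQ1, Finset.mem_filter, Finset.mem_erase] at hv; tauto
    have hsum1 : ∑ v ∈ Q.erase y, w v = Q1.card := by
      rw [Finset.card_filter]
      exact Finset.sum_congr rfl fun v hv => hwo v (Finset.ne_of_mem_erase hv)
    have hQ1c : G.IsClique (Q1 : Set V) := hQc.subset fun v hv => (hQ1m v hv).1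
    by_cases hyQ : y ∈ Q
    · rw [← Finset.add_sum_erase Q w hyQ, hsum1, hwy]
      have hd : Disjoint R Q1 := Finset.disjoint_left.2 fun v hv hv' =>
        (hQ1m v hv').2.2.2 (Finset.mem_inter.1 (hRT hv)).2
      rw [hm, ← Finset.card_union_of_disjoint hd]
      refine hk _ ?_ ?_
      · intro v hv
        rcases Finset.mem_union.1 hv with h | h
        · exact (Finset.mem_inter.1 (hRT h)).1
        · exact (hQ1m v h).2.2.1
      · intro a ha b hb hab
        have cross : ∀ a ∈ R, ∀ b ∈ Q1, G.Adj b a := by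
          intro a ha b hb
          obtain ⟨h1, h2, h3, h4⟩ := hQ1m b hb
          exact (hhom b (hQ h1) h2 a (Finset.mem_inter.1 (hRT ha)).2).2 (hQc h1 hyQ h2)
        rcases Finset.mem_union.1 ha with h | h <;> rcases Finset.mem_union.1 hb with h' | h'
        · exact hRc h h' hab
        · exact (cross a h b h').symm
        · exact cross b h' a h
        · exact hQ1c h h' hab
    · rw [← Finset.erase_eq_of_notMem hyQ, hsum1]
      exact hk Q1 (fun v hv => (hQ1m v hv).2.2.1) hQ1c
  obtain ⟨f, hf1, hf2⟩ := replication hP w k hwle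
  obtain ⟨g, hg1, hg2⟩ := hZ (T ∩ Z) Finset.inter_subset_right m (wle_one.1 hRmax)
  have hcard : (f y).card = m := by rw [(hf1 y hy).1, hwy]
  -- identify the `m` colours of `Z` with the colours of `y`
  let e : ℕ → ℕ := fun i => if h : i < m then (f y).orderEmbOfFin hcard ⟨i, h⟩ else 0
  have he : ∀ i < m, e i ∈ f y := fun i hi => by
    simp only [e, hi, dif_pos]; exact Finset.orderEmbOfFin_mem _ _ _
  have hinj : ∀ i < m, ∀ j < m, e i = e j → i = j := fun i hi j hj h => by
    simp only [e, hi, hj, dif_pos] at h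
    simpa using ((f y).orderEmbOfFin hcard).injective h
  have hsing : ∀ v ∈ T, v ∉ Z → ∃ a, f v = {a} := by
    intro v hv hvZ
    obtain ⟨h1, h2⟩ := hTP v hv hvZ
    apply Finset.card_eq_one.1
    rw [(hf1 v h1).1, hwo v h2, if_pos ⟨hv, hvZ⟩]
  choose! h hh using hsing
  have cross : ∀ a ∈ T, a ∈ Z → ∀ b ∈ T, b ∉ Z → G.Adj b a → e (g a) ≠ h b := by
    intro a ha haZ b hb hbZ hab heq
    obtain ⟨h1, h2⟩ := hTP b hb hbZ
    have hd := hf2 b h1 y hy ((hhom b h1 h2 a haZ).1 hab)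
    rw [hh b hb hbZ, Finset.disjoint_singleton_left, ← heq] at hd
    exact hd (he _ (hg1 a (by simp [ha, haZ])))
  refine ⟨fun v => if v ∈ Z then e (g v) else h v, ?_, ?_⟩
  · intro v hv
    by_cases hvZ : v ∈ Z
    · simp only [hvZ, if_true]
      simpa using (hf1 y hy).2 (he _ (hg1 v (by simp [hv, hvZ])))
    · simp only [hvZ, if_false]
      have := (hf1 v (hTP v hv hvZ).1).2
      rw [hh v hv hvZ] at this
      simpa using this
  · intro a ha b hb hab
    by_cases haZ : a ∈ Z <;> by_cases hbZ : b ∈ Z <;> simp only [haZ, hbZ, if_true, if_false]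
    · intro heq
      have ha' : a ∈ T ∩ Z := by simp [ha, haZ]
      have hb' : b ∈ T ∩ Z := by simp [hb, hbZ]
      exact hg2 a ha' b hb' hab (hinj _ (hg1 a ha') _ (hg1 b hb') heq)
    · exact cross a ha haZ b hb hbZ hab.symm
    · exact (cross b hb hbZ a ha haZ hab).symm
    · intro heq
      have hd := hf2 a (hTP a ha haZ).1 b (hTP b hb hbZ).1 hab
      rw [hh a ha haZ, hh b hb hbZ] at hd
      simp [heq] at hd

/-! ### Minimally imperfect graphs -/

lemma colOn_extend {G : SimpleGraph V} {F : Finset V} {s : V} {k : ℕ} {f : V → ℕ}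
    (h1 : ∀ v ∈ F.erase s, f v < k)
    (h2 : ∀ x ∈ F.erase s, ∀ y ∈ F.erase s, G.Adj x y → f x ≠ f y)
    {a : ℕ} (ha : a < k) (h3 : ∀ y ∈ F.erase s, G.Adj s y → f y ≠ a) : ColOn G F k := by
  refine ⟨Function.update f s a, ?_, ?_⟩
  · intro v hv
    by_cases hvs : v = s
    · subst hvs; simpa using ha
    · rw [Function.update_of_ne hvs]
      exact h1 v (Finset.mem_erase.2 ⟨hvs, hv⟩)
  · intro x hx y hy hxy
    by_cases hxs : x = s
    · subst hxs
      rw [Function.update_self, Function.update_of_ne hxy.ne']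
      exact (h3 y (Finset.mem_erase.2 ⟨hxy.ne', hy⟩) hxy).symm
    · by_cases hys : y = s
      · subst hys
        rw [Function.update_self, Function.update_of_ne hxs]
        exact h3 x (Finset.mem_erase.2 ⟨hxs, hx⟩) hxy.symm
      · rw [Function.update_of_ne hxs, Function.update_of_ne hys]
        exact h2 x (Finset.mem_erase.2 ⟨hxs, hx⟩) y (Finset.mem_erase.2 ⟨hys, hy⟩) hxy

lemma MinImp.primeOn {G : SimpleGraph V} {F : Finset V} (hF : MinImp G F) : PrimeOn G F := by
  rintro Y ⟨hYF, hY⟩ h2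
  by_contra hne
  obtain ⟨y, hy⟩ : Y.Nonempty := Finset.card_pos.1 (by omega)
  obtain ⟨y', hy', hyy⟩ := Finset.exists_mem_ne (by omega : 1 < Y.card) y
  have hYp : Perf G Y := hF.2 Y (Finset.ssubset_iff_subset_ne.2 ⟨hYF, hne⟩)
  have hP : Perf G (insert y (F \ Y)) := by
    refine hF.2 _ (Finset.ssubset_iff_subset_ne.2 ⟨?_, ?_⟩)
    · intro v hv
      simp only [Finset.mem_insert, Finset.mem_sdiff] at hv
      rcases hv with rfl | h
      · exact hYF hy
      · exact h.1
    · intro h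
      have : y' ∈ insert y (F \ Y) := by rw [h]; exact hYF hy'
      simp [hyy, hy'] at this
  have hsub := substitution hP (Finset.mem_insert_self _ _) hYp (by
    intro p hp hpy z hz
    have hp' : p ∈ F ∧ p ∉ Y := by simpa [hpy] using hp
    rcases hY p hp'.1 hp'.2 with h | h
    · simp [h z hz, h y hy]
    · simp [h z hz, h y hy])
  refine hF.1 (hsub.mono ?_)
  intro v hv
  by_cases hvY : v ∈ Y
  · simp [hvY]
  · have : v ≠ y := fun h => hvY (h ▸ hy)
    simp [hv, hvY, this]

lemma MinImp.nonSplit {G : SimpleGraph V} {F : Finset V} (hF : MinImp G F) : NonSplit G F := by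
  intro I Q hIQ hQ hI
  obtain ⟨k, hk, hcol⟩ := hF.fails
  by_cases h : F ⊆ Q
  · have hc := hk F subset_rfl (hQ.subset h)
    refine hcol ⟨fun v => if hv : v ∈ F then (F.equivFin ⟨v, hv⟩).1 else 0, ?_, ?_⟩
    · intro v hv
      simp only [hv, dif_pos]
      exact (F.equivFin ⟨v, hv⟩).2.trans_le hc
    · intro x hx y hy hxy heq
      simp only [hx, hy, dif_pos] at heq
      have := F.equivFin.injective (Fin.ext heq)
      simp only [Subtype.mk.injEq] at this
      exact hxy.ne this
  · obtain ⟨i, hi, hiQ⟩ := Finset.not_subset.1 h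
    have hmem : ∀ v ∈ F, v ∉ Q → v ∈ I := fun v hv hvQ =>
      (Finset.mem_union.1 (hIQ hv)).resolve_right hvQ
    classical
    set N := F.filter fun v => G.Adj i v with hN
    have hNQ : ∀ v ∈ N, v ∈ F ∧ v ∈ Q ∧ G.Adj i v := by
      intro v hv
      simp only [hN, Finset.mem_filter] at hv
      refine ⟨hv.1, ?_, hv.2⟩
      by_contra hvQ
      exact hI i (hmem i hi hiQ) v (hmem v hv.1 hvQ) hv.2
    have hNc : (insert i N).card ≤ k := by
      refine hk _ ?_ (clique_insert (hQ.subset fun v hv => (hNQ v hv).2.1)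
        fun v hv _ => (hNQ v hv).2.2)
      intro v hv
      rcases Finset.mem_insert.1 hv with rfl | h
      · exact hi
      · exact (hNQ v h).1
    have hiN : i ∉ N := fun h => hiQ (hNQ i h).2.1
    rw [Finset.card_insert_of_notMem hiN] at hNc
    obtain ⟨f, hf1, hf2⟩ := hF.2 (F.erase i) (Finset.erase_ssubset hi) _ subset_rfl k
      (hk.mono (Finset.erase_subset _ _))
    obtain ⟨a, ha, haN⟩ : ∃ a ∈ Finset.range k, a ∉ N.image f := by
      apply Finset.exists_mem_notMem_of_card_lt_card
      have := Finset.card_image_le (s := N) (f := f)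
      simp only [Finset.card_range]; omega
    refine hcol (colOn_extend hf1 hf2 (Finset.mem_range.1 ha) fun y hy hiy heq => haN ?_)
    exact Finset.mem_image.2 ⟨y, by simp [hN, hiy, Finset.mem_of_mem_erase hy], heq⟩

lemma NonSplit.nonempty {G : SimpleGraph V} {F : Finset V} (h : NonSplit G F) : F.Nonempty := by
  by_contra hF
  rw [Finset.not_nonempty_iff_eq_empty] at hF
  exact h ∅ ∅ (by simp [hF]) (by simp) (by simp)

lemma NonSplit.exists_edge {G : SimpleGraph V} {F : Finset V} (h : NonSplit G F) :
    ∃ x ∈ F, ∃ y ∈ F, G.Adj x y := by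
  by_contra! hF
  exact h F ∅ (by simp) (by simp) hF

lemma NonSplit.three_le {G : SimpleGraph V} {F : Finset V} (h : NonSplit G F) : 3 ≤ F.card := by
  by_contra! hlt
  obtain ⟨x, hx, y, hy, hxy⟩ := h.exists_edge
  have hF : F = {x, y} := by
    symm
    apply Finset.eq_of_subset_of_card_le
    · intro v hv; simp only [Finset.mem_insert, Finset.mem_singleton] at hv
      rcases hv with rfl | rfl <;> assumption
    · rw [Finset.card_pair hxy.ne]; omega
  refine h ∅ {x, y} (by simp [hF]) ?_ (by simp)
  exact clique_insert (by simp) (by simp [hxy])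

lemma MinImp.exists_clique {G : SimpleGraph V} {F : Finset V} (hF : MinImp G F) {k : ℕ}
    (hk : CliqueLE G F k) (hcol : ¬ ColOn G F k) {s : V} (hs : s ∈ F) :
    ∃ Q ⊆ F, G.IsClique (Q : Set V) ∧ s ∈ Q ∧ Q.card = k := by
  classical
  by_contra! hno
  have hk1 : 1 ≤ k := by simpa using hk {s} (by simpa using hs) (by simp)
  obtain ⟨f, hf1, hf2⟩ := hF.2 (F.erase s) (Finset.erase_ssubset hs) _ subset_rfl k
    (hk.mono (Finset.erase_subset _ _))
  set A := (F.erase s).filter fun v => f v = 0 with hA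
  have hAm : ∀ v, v ∈ A ↔ v ∈ F.erase s ∧ f v = 0 := by simp [hA]
  by_cases hAe : A = ∅
  · refine hcol (colOn_extend hf1 hf2 (a := 0) (by omega) fun y hy _ h0 => ?_)
    have := (hAm y).2 ⟨hy, h0⟩
    simp [hAe] at this
  obtain ⟨y, hy⟩ := Finset.nonempty_iff_ne_empty.2 hAe
  have hyF : y ∈ F := Finset.mem_of_mem_erase ((hAm y).1 hy).1
  have hlt : F \ A ⊂ F := Finset.ssubset_iff_subset_ne.2 ⟨Finset.sdiff_subset, fun h => by
    have : y ∈ F \ A := by rw [h]; exact hyF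
    simp [hy] at this⟩
  have hcl : CliqueLE G (F \ A) (k - 1) := by
    intro Q hQ hQc
    by_contra! hgt
    have hQF : Q ⊆ F := hQ.trans Finset.sdiff_subset
    have hQk := hk Q hQF hQc
    have hsQ : s ∉ Q := fun h => hno Q hQF hQc h (by omega)
    have hQe : ∀ v ∈ Q, v ∈ F.erase s ∧ f v ≠ 0 := by
      intro v hv
      have h1 : v ∈ F.erase s := Finset.mem_erase.2 ⟨fun h => hsQ (h ▸ hv), hQF hv⟩
      refine ⟨h1, fun h0 => ?_⟩
      have := hQ hv
      rw [Finset.mem_sdiff, hAm] at this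
      exact this.2 ⟨h1, h0⟩
    have hle : Q.card ≤ ((Finset.range k).erase 0).card := by
      refine Finset.card_le_card_of_injOn f ?_ ?_
      · intro v hv
        rw [Finset.coe_erase]
        exact ⟨by simpa using hf1 v (hQe v hv).1, (hQe v hv).2⟩
      · intro u hu v hv huv
        by_contra hne
        exact hf2 u (hQe u hu).1 v (hQe v hv).1 (hQc hu hv hne) huv
    rw [Finset.card_erase_of_mem (Finset.mem_range.2 hk1), Finset.card_range] at hle
    omega
  obtain ⟨g, hg1, hg2⟩ := hF.2 _ hlt _ subset_rfl _ hcl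
  refine hcol ⟨fun v => if v ∈ A then k - 1 else g v, ?_, ?_⟩
  · intro v hv
    by_cases hvA : v ∈ A
    · simp only [hvA, if_true]; omega
    · simp only [hvA, if_false]
      have := hg1 v (by simp [hv, hvA]); omega
  · intro x hx y hy hxy
    by_cases hxA : x ∈ A <;> by_cases hyA : y ∈ A <;> simp only [hxA, hyA, if_true, if_false]
    · intro _
      have h1 := (hAm x).1 hxA
      have h2 := (hAm y).1 hyA
      exact hf2 x h1.1 y h2.1 hxy (h1.2.trans h2.2.symm)
    · have := hg1 y (by simp [hy, hyA]); omega
    · have := hg1 x (by simp [hx, hxA]); omega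
    · exact hg2 x (by simp [hx, hxA]) y (by simp [hy, hyA]) hxy

lemma edge_clique {G : SimpleGraph V} {x y : V} (h : G.Adj x y) :
    G.IsClique (({x, y} : Finset V) : Set V) := clique_insert (by simp) (by simp [h])

/-! ### Odd holes -/

lemma cyc_adj {k : ℕ} (hk : 3 ≤ k) (i j : Fin k) : (cycleGraph k).Adj i j ↔
    i.val + 1 = j.val ∨ j.val + 1 = i.val ∨ (i.val = 0 ∧ j.val + 1 = k) ∨
      (j.val = 0 ∧ i.val + 1 = k) := by
  rw [cycleGraph_adj', Fin.val_sub, Fin.val_sub]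
  have hi := i.2
  have hj := j.2
  have key : ∀ a b : ℕ, a < k → b < k → ((k - b + a) % k = 1 ↔ b + 1 = a ∨ (a = 0 ∧ b + 1 = k)) := by
    intro a b ha hb
    rcases lt_or_ge (k - b + a) k with h | h
    · rw [Nat.mod_eq_of_lt h]; omega
    · rw [Nat.mod_eq_sub_mod h, Nat.mod_eq_of_lt (by omega)]; omega
  rw [key _ _ hi hj, key _ _ hj hi]
  omega

/-- A triangle-free graph that is not bipartite has an odd hole, namely a shortest odd closed
walk. -/
lemma exists_oddHole {G : SimpleGraph V} {F : Finset V} (hcl : CliqueLE G F 2)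
    (hcol : ¬ ColOn G F 2) : ∃ k c, IsOddHole G F k c := by
  classical
  let H : SimpleGraph V :=
    { Adj := fun x y => x ∈ F ∧ y ∈ F ∧ G.Adj x y
      symm := ⟨fun x y h => ⟨h.2.1, h.1, h.2.2.symm⟩⟩
      loopless := ⟨fun x h => G.loopless.irrefl x h.2.2⟩ }
  have hH : ¬ H.Colorable 2 := by
    rintro ⟨C⟩
    refine hcol ⟨fun v => (C v).val, fun v _ => (C v).2, fun x hx y hy hxy heq => ?_⟩
    exact C.valid (show H.Adj x y from ⟨hx, hy, hxy⟩) (Fin.ext heq)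
  have hex : ∃ n, ∃ u, ∃ w : H.Walk u u, Odd w.length ∧ w.length = n := by
    rw [SimpleGraph.two_colorable_iff_forall_loop_even] at hH
    push Not at hH
    obtain ⟨u, w, hw⟩ := hH
    exact ⟨_, u, w, by simpa using hw, rfl⟩
  obtain ⟨u, w, hodd, hn⟩ := Nat.find_spec hex
  have hmin : ∀ x (p : H.Walk x x), Odd p.length → Nat.find hex ≤ p.length :=
    fun x p hp => Nat.find_min' hex ⟨x, p, hp, rfl⟩
  set n := Nat.find hex
  rw [hn] at hodd
  have hwalk1 : ∀ i j, i ≤ j → j ≤ n →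
      ∃ p : H.Walk (w.getVert i) (w.getVert j), p.length = j - i := by
    intro i j hij hj
    refine ⟨((w.take j).drop i).copy ?_ rfl, ?_⟩
    · rw [Walk.take_getVert]; congr 1; omega
    · rw [Walk.length_copy, Walk.drop_length, Walk.take_length]; omega
  have hwalk2 : ∀ i j, i ≤ j → j ≤ n →
      ∃ p : H.Walk (w.getVert j) (w.getVert i), p.length = n - (j - i) := by
    intro i j hij hj
    refine ⟨(w.drop j).append (w.take i), ?_⟩
    rw [Walk.length_append, Walk.drop_length, Walk.take_length]; omega
  have hstep : ∀ i, i < n → H.Adj (w.getVert i) (w.getVert (i + 1)) :=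
    fun i hi => w.adj_getVert_succ (by omega)
  have h0n : w.getVert 0 = w.getVert n := by
    rw [Walk.getVert_zero, ← hn, Walk.getVert_length]
  have hinj : ∀ i j, i < j → j < n → w.getVert i ≠ w.getVert j := by
    intro i j hij hj heq
    obtain ⟨p, hp⟩ := hwalk1 i j hij.le hj.le
    obtain ⟨q, hq⟩ := hwalk2 i j hij.le hj.le
    have h1 := hmin _ (p.copy heq rfl)
    have h2 := hmin _ (q.copy rfl heq)
    rw [Walk.length_copy, hp] at h1
    rw [Walk.length_copy, hq] at h2
    rcases Nat.even_or_odd (j - i) with h | h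
    · have := h2 (Nat.Odd.sub_even (by omega) hodd h)
      omega
    · have := h1 h
      omega
  have hchord : ∀ i j, i < j → j < n → H.Adj (w.getVert i) (w.getVert j) →
      i + 1 = j ∨ (i = 0 ∧ j + 1 = n) := by
    intro i j hij hj hadj
    obtain ⟨p, hp⟩ := hwalk1 i j hij.le hj.le
    obtain ⟨q, hq⟩ := hwalk2 i j hij.le hj.le
    have h1 := hmin _ (Walk.cons hadj.symm p)
    have h2 := hmin _ (Walk.cons hadj q)
    rw [Walk.length_cons, hp] at h1
    rw [Walk.length_cons, hq] at h2
    rcases Nat.even_or_odd (j - i) with h | h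
    · have := h1 h.add_one
      omega
    · have := h2 ((Nat.Odd.sub_odd hodd h).add_one)
      omega
  have hmem : ∀ i, i < n → w.getVert i ∈ F := fun i hi => (hstep i hi).1
  have hn5 : 5 ≤ n := by
    by_contra! hlt
    have h13 : n = 1 ∨ n = 3 := by
      obtain ⟨m, hm⟩ := hodd; omega
    rcases h13 with h | h
    · have := hstep 0 (by omega)
      rw [h0n, h] at this
      exact H.loopless.irrefl _ this
    · have a1 := (hstep 0 (by omega)).2.2
      have a2 := (hstep 1 (by omega)).2.2
      have a3 := (hstep 2 (by omega)).2.2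
      simp only [zero_add, Nat.reduceAdd] at a1 a2 a3
      rw [← h, ← h0n] at a3
      have := hcl {w.getVert 0, w.getVert 1, w.getVert 2} ?_
        (clique_insert (edge_clique a2) (by
          intro x hx _
          simp only [Finset.mem_insert, Finset.mem_singleton] at hx
          rcases hx with rfl | rfl
          · exact a1
          · exact a3.symm))
      · rw [Finset.card_eq_three.2 ⟨_, _, _, a1.ne, a3.ne', a2.ne, rfl⟩] at this
        omega
      · intro v hv
        simp only [Finset.mem_insert, Finset.mem_singleton] at hv
        rcases hv with rfl | rfl | rfl
        exacts [hmem 0 (by omega), hmem 1 (by omega), hmem 2 (by omega)]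
  refine ⟨n, fun i => w.getVert i, hn5, hodd, ?_, fun i => hmem _ i.2, ?_⟩
  · intro i j heq
    rcases lt_trichotomy i.val j.val with h | h | h
    · exact absurd heq (hinj _ _ h j.2)
    · exact Fin.ext h
    · exact absurd heq.symm (hinj _ _ h i.2)
  · intro i j
    rw [cyc_adj (by omega)]
    show G.Adj (w.getVert i) (w.getVert j) ↔ _
    have hi := i.2
    have hj := j.2
    constructor
    · intro hadj
      have hH : H.Adj (w.getVert i) (w.getVert j) := ⟨hmem _ i.2, hmem _ j.2, hadj⟩
      rcases lt_trichotomy i.val j.val with h | h | h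
      · have := hchord _ _ h j.2 hH; omega
      · rw [h] at hadj; exact absurd hadj (G.loopless.irrefl _)
      · have := hchord _ _ h i.2 hH.symm; omega
    · rintro (h | h | ⟨h, h'⟩ | ⟨h, h'⟩)
      · rw [← h]; exact (hstep i hi).2.2
      · rw [← h]; exact (hstep j hj).2.2.symm
      · have e := (hstep j hj).2.2
        rw [h', ← h0n, ← h] at e
        exact e.symm
      · have e := (hstep i hi).2.2
        rw [h', ← h0n, ← h] at e
        exact e

lemma MinImp.two_le {G : SimpleGraph V} {F : Finset V} (hF : MinImp G F) {k : ℕ}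
    (hk : CliqueLE G F k) : 2 ≤ k := by
  obtain ⟨x, hx, y, hy, hxy⟩ := hF.nonSplit.exists_edge
  have := hk {x, y} (by
    intro v hv; simp only [Finset.mem_insert, Finset.mem_singleton] at hv
    rcases hv with rfl | rfl <;> assumption) (edge_clique hxy)
  rwa [Finset.card_pair hxy.ne] at this

lemma IsOddHole.not_perf {G : SimpleGraph V} {F : Finset V} {k : ℕ} {c : Fin k → V}
    (h : IsOddHole G F k c) : ¬ Perf G (Finset.univ.image c) := by
  classical
  obtain ⟨h5, hodd, hinj, -, hadj⟩ := h
  intro hP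
  have hcl : CliqueLE G (Finset.univ.image c) 2 := by
    intro Q hQ hQc
    by_contra! hgt
    obtain ⟨x, y, z, hx, hy, hz, hxy, hxz, hyz⟩ := Finset.two_lt_card_iff.1 hgt
    have ex : ∀ v ∈ Q, ∃ i, c i = v := fun v hv => by simpa using hQ hv
    obtain ⟨i, rfl⟩ := ex x hx
    obtain ⟨j, rfl⟩ := ex y hy
    obtain ⟨l, rfl⟩ := ex z hz
    have a1 := (hadj i j).1 (hQc hx hy hxy)
    have a2 := (hadj i l).1 (hQc hx hz hxz)
    have a3 := (hadj j l).1 (hQc hy hz hyz)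
    rw [cyc_adj (by omega)] at a1 a2 a3
    have := i.2; have := j.2; have := l.2
    omega
  obtain ⟨f, hf1, hf2⟩ := hP _ subset_rfl 2 hcl
  have hm : ∀ i, c i ∈ Finset.univ.image c := fun i => by simp
  have hcol : (cycleGraph k).Colorable 2 := by
    refine ⟨Coloring.mk (fun i => (⟨f (c i), hf1 _ (hm i)⟩ : Fin 2)) ?_⟩
    intro i j hij heq
    exact hf2 _ (hm i) _ (hm j) ((hadj i j).2 hij) (by simpa using heq)
  have h3 := chromaticNumber_cycleGraph_of_odd k (by omega) hodd
  have := chromaticNumber_le_iff_colorable.2 hcol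
  rw [h3] at this
  norm_cast at this

lemma MinImp.eq_image {G : SimpleGraph V} {F : Finset V} (hF : MinImp G F) {k : ℕ} {c : Fin k → V}
    (h : IsOddHole G F k c) : F = Finset.univ.image c := by
  by_contra hne
  refine h.not_perf (hF.2 _ (Finset.ssubset_iff_subset_ne.2 ⟨?_, fun h => hne h.symm⟩))
  intro v hv
  obtain ⟨i, -, rfl⟩ := Finset.mem_image.1 hv
  exact h.2.2.2.1 i

/-! ### Complementation -/

/-- The bull is self-complementary. -/
lemma NoBull.compl {G : SimpleGraph V} (h : NoBull G) : NoBull Gᶜ := by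
  intro p q r x y pq pr qr xp yq xq xr yp yr xy
  have h1 : x ≠ q := by rintro rfl; exact xr qr
  have h2 : x ≠ r := by rintro rfl; exact xq qr.symm
  have h3 : y ≠ p := by rintro rfl; exact yr pr
  have h4 : y ≠ r := by rintro rfl; exact yp pr.symm
  have h5 : x ≠ y := by rintro rfl; exact yp xp
  simp only [compl_adj] at *
  refine h x y r q p ?_ ?_ ?_ ?_ ?_ ?_ ?_ ?_ ?_ ?_ <;> simp_all [G.adj_comm]

lemma IsMod.of_compl {G : SimpleGraph V} {T Y : Finset V} (h : IsMod Gᶜ T Y) : IsMod G T Y := by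
  refine ⟨h.1, fun z hz hzY => ?_⟩
  have hne : ∀ y ∈ Y, z ≠ y := fun y hy h => hzY (h ▸ hy)
  rcases h.2 z hz hzY with h' | h'
  · exact Or.inr fun y hy => ((compl_adj _ _ _).1 (h' y hy)).2
  · refine Or.inl fun y hy => ?_
    by_contra hn
    exact h' y hy ((compl_adj _ _ _).2 ⟨hne y hy, hn⟩)

lemma PrimeOn.compl {G : SimpleGraph V} {T : Finset V} (h : PrimeOn G T) : PrimeOn Gᶜ T :=
  fun Y hY => h Y hY.of_compl

lemma NonSplit.compl {G : SimpleGraph V} {F : Finset V} (h : NonSplit G F) : NonSplit Gᶜ F := by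
  intro I Q hIQ hQ hI
  refine h Q I (by rwa [Finset.union_comm]) ?_ ?_
  · intro x hx y hy hxy
    by_contra hn
    exact hI x hx y hy ((compl_adj _ _ _).2 ⟨hxy, hn⟩)
  · intro x hx y hy hxy
    exact ((compl_adj _ _ _).1 (hQ hx hy hxy.ne)).2 hxy

/-! ### Attaching vertices to a prime set in a bull-free graph -/

/-- If `u` has a neighbour `a` anticomplete to the prime set `F`, and `u` sees an edge of `F`,
then the component of that edge in `N(u) ∩ F` is a module, hence `u` is complete to `F`. -/
lemma stable_or_complete {G : SimpleGraph V} (hb : NoBull G) {F : Finset V} (hF : PrimeOn G F)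
    {a u : V} (hau : G.Adj a u) (ha : ∀ x ∈ F, ¬ G.Adj a x) :
    (∀ x ∈ F, ∀ y ∈ F, G.Adj u x → G.Adj u y → ¬ G.Adj x y) ∨ ∀ x ∈ F, G.Adj u x := by
  classical
  by_contra hcon
  push Not at hcon
  obtain ⟨⟨x, hx, y, hy, hux, huy, hxy⟩, w, hw, huw⟩ := hcon
  obtain ⟨K, hKA, hxK, hcl, hind⟩ := exists_comp G (F.filter fun v => G.Adj u v) x
    (by simp [hx, hux])
  have hKm : ∀ v ∈ K, v ∈ F ∧ G.Adj u v := fun v hv => by simpa using hKA hv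
  have hyK : y ∈ K := hcl x hxK y (by simp [hy, huy]) hxy
  have hKF : K = F := by
    refine hF K ⟨fun v hv => (hKm v hv).1, fun z hz hzK => ?_⟩
      (Finset.one_lt_card.2 ⟨x, hxK, y, hyK, hxy.ne⟩)
    by_cases huz : G.Adj u z
    · right
      intro v hv hzv
      exact hzK (hcl v hv z (by simp [hz, huz]) hzv.symm)
    · by_cases hex : ∃ v ∈ K, G.Adj z v
      · left
        refine hind _ ?_ hex
        intro p hp q hq hpq hzp
        by_contra hzq
        exact hb u p q a z (hKm p hp).2 (hKm q hq).2 hpq hau hzp (ha p (hKm p hp).1)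
          (ha q (hKm q hq).1) (fun h => huz h.symm) hzq (ha z hz)
      · right
        intro v hv hzv
        exact hex ⟨v, hv, hzv⟩
  exact huw (hKm w (hKF ▸ hw)).2

/-- The complementary form of `stable_or_complete`. -/
lemma clique_or_anticomplete {G : SimpleGraph V} (hb : NoBull G) {F : Finset V}
    (hF : PrimeOn G F) {a u : V} (hne : a ≠ u) (hau : ¬ G.Adj a u) (ha : ∀ x ∈ F, G.Adj a x)
    (hu : u ∉ F) :
    (∀ x ∈ F, ∀ y ∈ F, ¬ G.Adj u x → ¬ G.Adj u y → x ≠ y → G.Adj x y) ∨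
      ∀ x ∈ F, ¬ G.Adj u x := by
  have hux : ∀ x ∈ F, u ≠ x := fun x hx h => hu (h ▸ hx)
  have := stable_or_complete hb.compl hF.compl (a := a) (u := u)
    ((compl_adj _ _ _).2 ⟨hne, hau⟩) (fun x hx h => ((compl_adj _ _ _).1 h).2 (ha x hx))
  rcases this with h | h
  · left
    intro x hx y hy h1 h2 hxy
    by_contra hn
    exact h x hx y hy ((compl_adj _ _ _).2 ⟨hux x hx, h1⟩) ((compl_adj _ _ _).2 ⟨hux y hy, h2⟩)
      ((compl_adj _ _ _).2 ⟨hxy, hn⟩)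
  · right
    exact fun x hx => ((compl_adj _ _ _).1 (h x hx)).2

/-- A mixed vertex of a prime set has a neighbour and a non-neighbour that are not adjacent. -/
lemma mixed_pair {G : SimpleGraph V} {F : Finset V} (hF : PrimeOn G F) (h3 : 3 ≤ F.card) {z : V}
    (h1 : ∃ f ∈ F, G.Adj z f) (h2 : ∃ g ∈ F, ¬ G.Adj z g) :
    ∃ f ∈ F, ∃ g ∈ F, G.Adj z f ∧ ¬ G.Adj z g ∧ ¬ G.Adj g f := by
  classical
  by_contra! hcon
  obtain ⟨f, hf, hzf⟩ := h1
  obtain ⟨g, hg, hzg⟩ := h2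
  have hc := Finset.card_filter_add_card_filter_not (s := F) (fun v => G.Adj z v)
  have hlt : 2 ≤ (F.filter fun v => G.Adj z v).card ∨ 2 ≤ (F.filter fun v => ¬ G.Adj z v).card := by
    omega
  rcases hlt with h | h
  · have := hF _ ⟨Finset.filter_subset _ _, fun v hv hvN => Or.inl fun y hy => ?_⟩ h
    · have hg' := hg
      rw [← this] at hg'
      simp [hzg] at hg'
    · simp only [Finset.mem_filter, hv, true_and] at hvN hy
      exact hcon y hy.1 v hv hy.2 hvN
  · have := hF _ ⟨Finset.filter_subset _ _, fun v hv hvN => Or.inl fun y hy => ?_⟩ h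
    · have hf' := hf
      rw [← this] at hf'
      simp [hzf] at hf'
    · simp only [Finset.mem_filter, hv, true_and, not_not] at hvN hy
      exact (hcon v hv y hy.1 hvN hy.2).symm

/-- If an anticentre `b` of `F` sees a mixed vertex `z`, then every centre `a` of `F` sees `b`. -/
lemma center_adj {G : SimpleGraph V} (hb : NoBull G) {F : Finset V} (hF : PrimeOn G F)
    (hS : NonSplit G F) {a b z : V} (ha : ∀ x ∈ F, G.Adj a x) (hbF : ∀ x ∈ F, ¬ G.Adj b x)
    (hz : z ∉ F) (h1 : ∃ f ∈ F, G.Adj z f) (h2 : ∃ g ∈ F, ¬ G.Adj z g) (hbz : G.Adj b z) :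
    G.Adj a b := by
  classical
  obtain ⟨f, hf, g, hg, hzf, hzg, hgf⟩ := mixed_pair hF hS.three_le h1 h2
  have hst := (stable_or_complete hb hF hbz hbF).resolve_right fun h => hzg (h g hg)
  have haz : G.Adj a z := by
    by_contra hn
    have hne : a ≠ z := by rintro rfl; exact hzg (ha g hg)
    have hcl := (clique_or_anticomplete hb hF hne hn ha hz).resolve_right fun h => h f hf hzf
    refine hS (F.filter fun v => G.Adj z v) (F.filter fun v => ¬ G.Adj z v) ?_ ?_ ?_
    · rw [Finset.filter_union_filter_not_eq]
    · intro x hx y hy hxy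
      rw [Finset.mem_coe, Finset.mem_filter] at hx hy
      exact hcl x hx.1 y hy.1 hx.2 hy.2 hxy
    · intro x hx y hy
      simp only [Finset.mem_filter] at hx hy
      exact hst x hx.1 y hy.1 hx.2 hy.2
  by_contra hab
  exact hb a z f g b haz (ha f hf) hzf (ha g hg).symm hbz (fun h => hzg h.symm) hgf
    (fun h => hab h.symm) (hbF f hf) (fun h => hbF g hg h.symm)

/-- If every centre of `F` sees every mixed vertex, then `F` has no centre: otherwise the component
of `F` in the graph without the centres is a module. -/
lemma no_center {G : SimpleGraph V} (hb : NoBull G) {T F : Finset V} (hT : PrimeOn G T)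
    (hFT : F ⊆ T) (hF : PrimeOn G F) (hS : NonSplit G F)
    (hmix : ∀ a ∈ T, (∀ x ∈ F, G.Adj a x) → ∀ z ∈ T, z ∉ F → (∃ f ∈ F, G.Adj z f) →
      (∃ g ∈ F, ¬ G.Adj z g) → G.Adj a z)
    {a₀ : V} (ha₀T : a₀ ∈ T) (ha₀ : ∀ x ∈ F, G.Adj a₀ x) : False := by
  classical
  obtain ⟨f₀, hf₀, f₁, hf₁, h01⟩ := hS.exists_edge
  set R := T.filter fun v => ∃ g ∈ F, ¬ G.Adj v g with hR
  have hRm : ∀ v, v ∈ R ↔ v ∈ T ∧ ∃ g ∈ F, ¬ G.Adj v g := fun v => by simp [hR]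
  have hFR : ∀ v ∈ F, v ∈ R := fun v hv => (hRm v).2 ⟨hFT hv, v, hv, G.loopless.irrefl v⟩
  obtain ⟨X, hXR, hf₀X, hXcl, hXind⟩ := exists_comp G R f₀ (hFR _ hf₀)
  have key : ∀ a ∈ T, a ∉ R → ∀ x ∈ X, G.Adj a x := by
    intro a haT haR
    have ha : ∀ x ∈ F, G.Adj a x := by
      intro x hx; by_contra hn; exact haR ((hRm a).2 ⟨haT, x, hx, hn⟩)
    obtain ⟨K, hKA, hf₀K, hKcl, hKind⟩ := exists_comp G (R.filter fun v => G.Adj a v) f₀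
      (by simp [hFR _ hf₀, ha _ hf₀])
    have hKm : ∀ v ∈ K, v ∈ R ∧ G.Adj a v := fun v hv => by simpa using hKA hv
    have hanti : ∀ y ∈ R, ¬ G.Adj a y → ∀ x ∈ K, ¬ G.Adj y x := by
      intro y hy hay
      obtain ⟨hyT, g, hg, hyg⟩ := (hRm y).1 hy
      have hyF : y ∉ F := fun h => hay (ha y h)
      have hyA : ∀ x ∈ F, ¬ G.Adj y x := by
        intro x hx hyx
        exact hay (hmix a haT ha y hyT hyF ⟨x, hx, hyx⟩ ⟨g, hg, hyg⟩)
      refine hKind _ ?_ ⟨f₀, hf₀K, hyA f₀ hf₀⟩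
      intro x hx x' hx' hxx hyx hyx'
      obtain ⟨hxT, g, hg, hxg⟩ := (hRm x).1 (hKm x hx).1
      have hx'F : x' ∉ F := fun h => hyA x' h hyx'
      have hx'A : ∀ v ∈ F, ¬ G.Adj x' v := by
        intro v hv hxv
        exact hay (center_adj hb hF hS ha hyA hx'F ⟨v, hv, hxv⟩ ((hRm x').1 (hKm x' hx').1).2 hyx')
      exact hb a x' x g y (hKm x' hx').2 (hKm x hx).2 hxx.symm (ha g hg).symm hyx'
        (fun h => hx'A g hg h.symm) (fun h => hxg h.symm) (fun h => hay h.symm) hyx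
        (fun h => hyA g hg h.symm)
    have hXK : ∀ x ∈ X, x ∈ K := by
      refine hXind _ ?_ ⟨f₀, hf₀X, hf₀K⟩
      intro x hx y hy hxy hxK
      by_cases hay : G.Adj a y
      · exact hKcl x hxK y (by simp [hXR hy, hay]) hxy
      · exact absurd hxy.symm (hanti y (hXR hy) hay x hxK)
    exact fun x hx => (hKm x (hXK x hx)).2
  have hXT : X = T := by
    refine hT X ⟨fun v hv => ((hRm v).1 (hXR hv)).1, fun z hz hzX => ?_⟩
      (Finset.one_lt_card.2 ⟨f₀, hf₀X, f₁, hXcl _ hf₀X _ (hFR _ hf₁) h01, h01.ne⟩)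
    by_cases hzR : z ∈ R
    · right
      intro x hx hzx
      exact hzX (hXcl x hx z hzR hzx.symm)
    · left
      exact key z hz hzR
  obtain ⟨-, g, hg, h⟩ := (hRm a₀).1 (hXR (hXT ▸ ha₀T))
  exact h (ha₀ g hg)

/-- In a prime bull-free graph, a prime non-split set does not have both a centre and an
anticentre. -/
lemma no_center_anticenter {G : SimpleGraph V} (hb : NoBull G) {T F : Finset V}
    (hT : PrimeOn G T) (hFT : F ⊆ T) (hF : PrimeOn G F) (hS : NonSplit G F)
    {a b : V} (haT : a ∈ T) (ha : ∀ x ∈ F, G.Adj a x) (hbT : b ∈ T) (hbF : b ∉ F)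
    (hbA : ∀ x ∈ F, ¬ G.Adj b x) : False := by
  by_cases hmix : ∀ a ∈ T, (∀ x ∈ F, G.Adj a x) → ∀ z ∈ T, z ∉ F → (∃ f ∈ F, G.Adj z f) →
      (∃ g ∈ F, ¬ G.Adj z g) → G.Adj a z
  · exact no_center hb hT hFT hF hS hmix haT ha
  push Not at hmix
  obtain ⟨a₁, -, ha₁, z, -, hzF, ⟨f, hf, hzf⟩, ⟨g, hg, hzg⟩, haz⟩ := hmix
  have ne : ∀ {v : V}, v ∉ F → ∀ x ∈ F, v ≠ x := fun hv x hx h => hv (h ▸ hx)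
  refine no_center hb.compl hT.compl hFT hF.compl hS.compl ?_ hbT
    (fun x hx => (compl_adj _ _ _).2 ⟨ne hbF x hx, hbA x hx⟩)
  intro b₁ _ hb₁ y _ hyF hy1 hy2
  obtain ⟨p, hp, hyp⟩ := hy1
  obtain ⟨q, hq, hyq⟩ := hy2
  rw [compl_adj] at hyp ⊢
  have hyq' : G.Adj y q := by
    by_contra hn; exact hyq ((compl_adj _ _ _).2 ⟨ne hyF q hq, hn⟩)
  have hb₁' : ∀ x ∈ F, ¬ G.Adj b₁ x := fun x hx => ((compl_adj _ _ _).1 (hb₁ x hx)).2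
  refine ⟨?_, fun hby => ?_⟩
  · rintro rfl; exact (hb₁' q hq hyq').elim
  -- `center_adj` in `G` and in its complement disagree about `a₁` and `b₁`
  have h1 := center_adj hb hF hS ha₁ hb₁' hyF ⟨q, hq, hyq'⟩ ⟨p, hp, hyp.2⟩ hby
  have h2 := center_adj hb.compl hF.compl hS.compl (a := b₁) (b := a₁) (z := z) hb₁
    (fun x hx h => ((compl_adj _ _ _).1 h).2 (ha₁ x hx)) hzF
    ⟨g, hg, (compl_adj _ _ _).2 ⟨ne hzF g hg, hzg⟩⟩
    ⟨f, hf, fun h => ((compl_adj _ _ _).1 h).2 hzf⟩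
    ((compl_adj _ _ _).2 ⟨by rintro rfl; exact hzg (ha₁ g hg), haz⟩)
  exact ((compl_adj _ _ _).1 h2).2 h1.symm

/-- A prime non-split set `F` with an anticentre has an anticentre `a` adjacent to some `u` whose
neighbourhood in `F` is nonempty and stable. -/
lemma exists_attach {G : SimpleGraph V} (hb : NoBull G) {T F : Finset V}
    (hT : PrimeOn G T) (hFT : F ⊆ T) (hF : PrimeOn G F) (hS : NonSplit G F)
    {b : V} (hbT : b ∈ T) (hbF : b ∉ F) (hbA : ∀ x ∈ F, ¬ G.Adj b x) :
    ∃ u ∈ T, ∃ a ∈ T, u ∉ F ∧ a ∉ F ∧ G.Adj a u ∧ (∀ x ∈ F, ¬ G.Adj a x) ∧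
      (∃ x ∈ F, G.Adj u x) ∧ ∀ x ∈ F, ∀ y ∈ F, G.Adj u x → G.Adj u y → ¬ G.Adj x y := by
  classical
  by_contra hcon
  set Y := T.filter fun v => v ∈ F ∨ ∃ x ∈ F, G.Adj v x with hY
  have hYm : ∀ v, v ∈ Y ↔ v ∈ T ∧ (v ∈ F ∨ ∃ x ∈ F, G.Adj v x) := fun v => by simp [hY]
  have hFY : F ⊆ Y := fun v hv => (hYm v).2 ⟨hFT hv, Or.inl hv⟩
  have hYT : Y = T := by
    refine hT Y ⟨Finset.filter_subset _ _, fun a ha haY => ?_⟩ ?_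
    · right
      intro u hu hau
      have ha' : a ∉ F ∧ ∀ x ∈ F, ¬ G.Adj a x := by
        rw [hYm] at haY; push Not at haY; exact haY ha
      obtain ⟨huT, hu'⟩ := (hYm u).1 hu
      have huF : u ∉ F := fun h => ha'.2 u h hau
      have hst := (stable_or_complete hb hF hau ha'.2).resolve_right fun h =>
        no_center_anticenter hb hT hFT hF hS huT h hbT hbF hbA
      exact hcon ⟨u, huT, a, ha, huF, ha'.1, hau, ha'.2, hu'.resolve_left huF, hst⟩
    · exact (by have := hS.three_le; omega : 2 ≤ F.card).trans (Finset.card_le_card hFY)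
  have : b ∈ Y := hYT ▸ hbT
  rcases ((hYm b).1 this).2 with h | ⟨x, hx, h⟩
  · exact hbF h
  · exact hbA x hx h

/-! ### Stable attachments to a minimally imperfect graph -/

lemma oddHole_five {G : SimpleGraph V} {F : Finset V} {c : Fin 5 → V} (hc : ∀ i, c i ∈ F)
    (h01 : G.Adj (c 0) (c 1)) (h12 : G.Adj (c 1) (c 2)) (h23 : G.Adj (c 2) (c 3))
    (h34 : G.Adj (c 3) (c 4)) (h40 : G.Adj (c 4) (c 0)) (h02 : ¬ G.Adj (c 0) (c 2))
    (h13 : ¬ G.Adj (c 1) (c 3)) (h24 : ¬ G.Adj (c 2) (c 4)) (h30 : ¬ G.Adj (c 3) (c 0))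
    (h41 : ¬ G.Adj (c 4) (c 1)) : IsOddHole G F 5 c := by
  have hadj : ∀ i j, G.Adj (c i) (c j) ↔ (cycleGraph 5).Adj i j := by
    intro i j
    rw [cyc_adj (by omega)]
    have s01 := h01.symm
    have s12 := h12.symm
    have s23 := h23.symm
    have s34 := h34.symm
    have s40 := h40.symm
    rw [G.adj_comm] at h02 h13 h24 h30 h41
    have s02 := h02
    have s13 := h13
    have s24 := h24
    have s30 := h30
    have s41 := h41
    rw [G.adj_comm] at s02 s13 s24 s30 s41
    fin_cases i <;> fin_cases j <;> simp_all
  refine ⟨le_rfl, by decide, ?_, hc, hadj⟩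
  have tw : ∀ i j : Fin 5, (∀ l, (cycleGraph 5).Adj i l ↔ (cycleGraph 5).Adj j l) → i = j := by
    decide
  intro i j hij
  exact tw i j fun l => by rw [← hadj, ← hadj, hij]

/-- In a bull-free graph, the only minimally imperfect graphs that can have a nonempty stable
attachment set of an outside vertex `u` are the odd holes.

With `s` an attachment, `K` is a component of `N(s) ∩ F` attaining the clique number. The vertices
outside `K` with a neighbour in `K` form a stable set, and a weighted colouring of the rest of `F`
can be arranged to give all of them one colour `α`, which a colouring of `K` need not use. -/
lemma no_stable_attach {G : SimpleGraph V} (hb : NoBull G) {F : Finset V} (hF : MinImp G F)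
    (hno : ∀ k c, ¬ IsOddHole G F k c) {u : V} (hne : ∃ s ∈ F, G.Adj u s)
    (hst : ∀ x ∈ F, ∀ y ∈ F, G.Adj u x → G.Adj u y → ¬ G.Adj x y) : False := by
  classical
  obtain ⟨k, hk, hcol⟩ := hF.fails
  have hk3 : 3 ≤ k := by
    have h2 := hF.two_le hk
    by_contra! hlt
    obtain rfl : k = 2 := by omega
    obtain ⟨n, c, hc⟩ := exists_oddHole hk hcol
    exact hno n c hc
  obtain ⟨s, hs, hus⟩ := hne
  obtain ⟨Q, hQF, hQc, hsQ, hQk⟩ := hF.exists_clique hk hcol hs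
  have hQe : (Q.erase s).card = k - 1 := by rw [Finset.card_erase_of_mem hsQ, hQk]
  obtain ⟨q, hq, q', hq', hqq⟩ := Finset.one_lt_card.1 (by omega : 1 < (Q.erase s).card)
  have hQm : ∀ v ∈ Q.erase s, v ∈ F ∧ G.Adj s v := fun v hv => by
    have h := Finset.mem_erase.1 hv
    exact ⟨hQF h.2, hQc hsQ h.2 h.1.symm⟩
  have hQec : G.IsClique ((Q.erase s : Finset V) : Set V) :=
    hQc.subset fun v hv => Finset.mem_of_mem_erase hv
  obtain ⟨K, hKA, hqK, hKcl, hKind⟩ := exists_comp G (F.filter fun v => G.Adj s v) q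
    (by simpa using hQm q hq)
  have hKm : ∀ v ∈ K, v ∈ F ∧ G.Adj s v := fun v hv => by simpa using hKA hv
  have hKu : ∀ v ∈ K, ¬ G.Adj u v := fun v hv h => hst s hs v (hKm v hv).1 hus h (hKm v hv).2
  have hQK : ∀ v ∈ Q.erase s, v ∈ K := by
    intro v hv
    by_cases h : v = q
    · exact h ▸ hqK
    · exact hKcl q hqK v (by simpa using hQm v hv) (hQec hq hv (Ne.symm h))
  have hsK : s ∉ K := fun h => G.loopless.irrefl _ (hKm s h).2
  -- a vertex outside `S ∪ N(s)` is complete or anticomplete to `K`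
  have hdich : ∀ z ∈ F, ¬ G.Adj u z → ¬ G.Adj s z → (∃ x ∈ K, G.Adj z x) →
      ∀ x ∈ K, G.Adj z x := by
    intro z hz huz hsz hex
    refine hKind _ ?_ hex
    intro x hx y hy hxy hzx
    by_contra hzy
    exact hb s x y u z (hKm x hx).2 (hKm y hy).2 hxy hus hzx (hKu x hx) (hKu y hy)
      (fun h => hsz h.symm) hzy huz
  -- two adjacent vertices complete to `K` would enlarge a maximum clique
  have hbig : ∀ x ∈ F, ∀ y ∈ F, (∀ v ∈ K, G.Adj x v) → (∀ v ∈ K, G.Adj y v) →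
      ¬ G.Adj x y := by
    intro x hx y hy hxK hyK hxy
    have hyQ : y ∉ Q.erase s := fun h => G.loopless.irrefl _ (hyK y (hQK y h))
    have hxQ : x ∉ insert y (Q.erase s) := by
      intro h
      rcases Finset.mem_insert.1 h with h | h
      · exact hxy.ne h
      · exact G.loopless.irrefl _ (hxK x (hQK x h))
    have := hk (insert x (insert y (Q.erase s))) ?_ ?_
    · rw [Finset.card_insert_of_notMem hxQ, Finset.card_insert_of_notMem hyQ, hQe] at this
      omega
    · intro v hv
      simp only [Finset.mem_insert] at hv
      rcases hv with rfl | rfl | h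
      · exact hx
      · exact hy
      · exact (hQm v h).1
    · refine clique_insert (clique_insert hQec fun v hv _ => hyK v (hQK v hv)) ?_
      intro v hv _
      rcases Finset.mem_insert.1 hv with rfl | h
      · exact hxy
      · exact hxK v (hQK v h)
  have hcross : ∀ t ∈ F, G.Adj u t → (∃ x ∈ K, G.Adj t x) → ∀ c ∈ F, ¬ G.Adj u c →
      ¬ G.Adj s c → (∀ x ∈ K, G.Adj c x) → ¬ G.Adj t c := by
    intro t ht hut htK c hc huc hsc hcK htc
    have hts : ¬ G.Adj t s := hst t ht s hs hut hus
    obtain ⟨x, hx, y, hy, hxy, htx, hty⟩ :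
        ∃ x ∈ K, ∃ y ∈ K, G.Adj x y ∧ G.Adj t x ∧ ¬ G.Adj t y := by
      by_contra! hcon
      exact hbig t ht c hc (hKind _ hcon htK) hcK htc
    have hdom : ∀ d ∈ F, G.Adj s d → G.Adj c d := by
      intro d hd hsd
      by_contra hcd
      have hdK : d ∉ K := fun h => hcd (hcK d h)
      have hdA : ∀ v ∈ K, ¬ G.Adj d v := fun v hv h =>
        hdK (hKcl v hv d (by simp [hd, hsd]) h.symm)
      have htd : G.Adj t d := by
        by_contra htd
        exact hb x s y t d (hKm x hx).2.symm hxy (hKm y hy).2 htx hsd.symm hts hty (hdA x hx)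
          (hdA y hy) htd
      refine hno 5 ![s, y, c, t, d] (oddHole_five ?_ (hKm y hy).2 (hcK y hy).symm htc.symm htd
        hsd.symm hsc (fun h => hty h.symm) hcd hts (hdA y hy))
      intro i
      fin_cases i
      exacts [hs, (hKm y hy).1, hc, ht, hd]
    obtain ⟨f, hf1, hf2⟩ := hF.2 (F.erase s) (Finset.erase_ssubset hs) _ subset_rfl k
      (hk.mono (Finset.erase_subset _ _))
    have hcs : c ∈ F.erase s := Finset.mem_erase.2 ⟨by rintro rfl; exact huc hus, hc⟩
    exact hcol (colOn_extend hf1 hf2 (hf1 c hcs) fun y hy hsy heq =>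
      hf2 c hcs y hy (hdom y (Finset.mem_of_mem_erase hy) hsy) heq.symm)
  -- `D` is the set of vertices outside `K` with a neighbour in `K`
  have hD : ∀ z ∈ F, z ∉ K → (∃ x ∈ K, G.Adj z x) →
      G.Adj u z ∨ (¬ G.Adj u z ∧ ¬ G.Adj s z ∧ ∀ x ∈ K, G.Adj z x) := by
    intro z hz hzK hex
    by_cases huz : G.Adj u z
    · exact Or.inl huz
    · have hsz : ¬ G.Adj s z := by
        intro hsz
        obtain ⟨x, hx, hzx⟩ := hex
        exact hzK (hKcl x hx z (by simp [hz, hsz]) hzx.symm)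
      exact Or.inr ⟨huz, hsz, hdich z hz huz hsz hex⟩
  have hDst : ∀ z ∈ F, z ∉ K → (∃ x ∈ K, G.Adj z x) → ∀ z' ∈ F, z' ∉ K →
      (∃ x ∈ K, G.Adj z' x) → ¬ G.Adj z z' := by
    intro z hz hzK hzx z' hz' hzK' hzx'
    rcases hD z hz hzK hzx with h | ⟨h1, h2, h3⟩ <;>
      rcases hD z' hz' hzK' hzx' with h' | ⟨h1', h2', h3'⟩
    · exact hst z hz z' hz' h h'
    · exact hcross z hz h hzx z' hz' h1' h2' h3'
    · exact fun hzz => hcross z' hz' h' hzx' z hz h1 h2 h3 hzz.symm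
    · exact (hbig z hz z' hz' h3 h3').elim
  -- a smallest `X ⊆ K` dominating the vertices of `S` with a neighbour in `K`
  obtain ⟨X, hX, hXmin⟩ := Finset.exists_min_image
    (K.powerset.filter fun X : Finset V => ∀ t ∈ F, G.Adj u t → (∃ x ∈ K, G.Adj t x) →
      ∃ x ∈ X, G.Adj t x) Finset.card 
    ⟨K, Finset.mem_filter.2 ⟨Finset.mem_powerset.2 subset_rfl, fun _ _ _ h => h⟩⟩
  simp only [Finset.mem_filter, Finset.mem_powerset] at hX hXmin
  obtain ⟨hXK, hXdom⟩ := hX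
  have hnest : ∀ x ∈ X, ∀ y ∈ X, G.Adj x y → ∃ t ∈ F, G.Adj u t ∧ G.Adj t x ∧ ¬ G.Adj t y := by
    intro x hx y hy hxy
    by_contra! hcon
    have := hXmin (X.erase x) ⟨(Finset.erase_subset _ _).trans hXK, ?_⟩
    · have := Finset.card_erase_lt_of_mem hx
      omega
    · intro t ht hut htK
      obtain ⟨v, hv, htv⟩ := hXdom t ht hut htK
      by_cases hvx : v = x
      · exact ⟨y, Finset.mem_erase.2 ⟨hxy.ne', hy⟩, hcon t ht hut (hvx ▸ htv)⟩
      · exact ⟨v, Finset.mem_erase.2 ⟨hvx, hv⟩, htv⟩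
  have hXst : ∀ x ∈ X, ∀ y ∈ X, ¬ G.Adj x y := by
    intro x hx y hy hxy
    obtain ⟨t, ht, hut, htx, hty⟩ := hnest x hx y hy hxy
    obtain ⟨r, hr, hur, hry, hrx⟩ := hnest y hy x hx hxy.symm
    exact hb x y s t r hxy (hKm x (hXK hx)).2.symm (hKm y (hXK hy)).2.symm htx hry hty
      (hst t ht s hs hut hus) hrx (hst r hr s hs hur hus) (hst t ht r hr hut hur)
  obtain ⟨x₀, hx₀, hsx₀⟩ := hXdom s hs hus ⟨q, hqK, (hKm q hqK).2⟩
  set F' := (F \ K) ∪ X with hF'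
  have hF'F : F' ⊆ F := by
    intro v hv
    rcases Finset.mem_union.1 hv with h | h
    · exact (Finset.mem_sdiff.1 h).1
    · exact (hKm v (hXK h)).1
  have hF'ss : F' ⊂ F := by
    refine Finset.ssubset_iff_subset_ne.2 ⟨hF'F, fun heq => ?_⟩
    have hin : ∀ v ∈ Q.erase s, v ∈ X := by
      intro v hv
      have : v ∈ F' := by rw [heq]; exact (hQm v hv).1
      rcases Finset.mem_union.1 this with h | h
      · exact absurd (hQK v hv) (Finset.mem_sdiff.1 h).2
      · exact h
    exact hXst q (hin q hq) q' (hin q' hq') (hQec hq hq' hqq)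
  have hF'm : ∀ v ∈ F', v ∉ X → v ∈ F ∧ v ∉ K := by
    intro v hv hvX
    exact Finset.mem_sdiff.1 ((Finset.mem_union.1 hv).resolve_right hvX)
  set w : V → ℕ := fun v => if v ∈ X then k - 1 else 1 with hw
  have hw1 : ∀ v, v ∉ X → w v = 1 := fun v hv => by simp [hw, hv]
  have hwX : ∀ v ∈ X, w v = k - 1 := fun v hv => by simp [hw, hv]
  have hWLE : WLE G w F' k := by
    intro R hR hRc
    by_cases hRX : ∃ x ∈ R, x ∈ X
    · obtain ⟨x, hxR, hxX⟩ := hRX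
      have hrest : ∀ v ∈ R.erase x, v ∉ X ∧ G.Adj v x := by
        intro v hv
        obtain ⟨hvx, hvR⟩ := Finset.mem_erase.1 hv
        have hadj : G.Adj v x := hRc hvR hxR hvx
        exact ⟨fun hvX => hXst v hvX x hxX hadj, hadj⟩
      have hcard : (R.erase x).card ≤ 1 := by
        rw [Finset.card_le_one]
        intro v hv v' hv'
        by_contra hvv
        have h1 := hF'm v (hR (Finset.mem_of_mem_erase hv)) (hrest v hv).1
        have h2 := hF'm v' (hR (Finset.mem_of_mem_erase hv')) (hrest v' hv').1
        exact hDst v h1.1 h1.2 ⟨x, hXK hxX, (hrest v hv).2⟩ v' h2.1 h2.2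
          ⟨x, hXK hxX, (hrest v' hv').2⟩
          (hRc (Finset.mem_of_mem_erase hv) (Finset.mem_of_mem_erase hv') hvv)
      have hsum : ∑ v ∈ R.erase x, w v = (R.erase x).card := by
        rw [Finset.sum_congr rfl fun v hv => hw1 v (hrest v hv).1]; simp
      rw [← Finset.add_sum_erase R w hxR, hsum, hwX x hxX]
      omega
    · push Not at hRX
      rw [Finset.sum_congr rfl fun v hv => hw1 v (hRX v hv)]
      simpa using hk R (hR.trans hF'F) hRc
  obtain ⟨f, hf1, hf2⟩ := replication (hF.2 F' hF'ss) w k hWLE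
  have hout : ∀ v ∈ F, v ∉ K → v ∈ F' ∧ v ∉ X ∧ (f v).card = 1 := by
    intro v hv hvK
    have h1 : v ∈ F' := Finset.mem_union.2 (Or.inl (Finset.mem_sdiff.2 ⟨hv, hvK⟩))
    have h2 : v ∉ X := fun h => hvK (hXK h)
    exact ⟨h1, h2, by rw [(hf1 v h1).1, hw1 v h2]⟩
  obtain ⟨α, hα⟩ := Finset.card_eq_one.1 (hout s hs hsK).2.2
  have hαk : α < k := by
    have := (hf1 s (hout s hs hsK).1).2
    rw [hα] at this
    simpa using this
  have hfX : ∀ x ∈ X, f x = (Finset.range k).erase α := by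
    intro x hx
    have hxF' : x ∈ F' := Finset.mem_union.2 (Or.inr hx)
    apply Finset.eq_of_subset_of_card_le
    · intro i hi
      refine Finset.mem_erase.2 ⟨?_, (hf1 x hxF').2 hi⟩
      rintro rfl
      have := hf2 s (hout s hs hsK).1 x hxF' (hKm x (hXK hx)).2
      rw [hα, Finset.disjoint_singleton_left] at this
      exact this hi
    · rw [Finset.card_erase_of_mem (Finset.mem_range.2 hαk), Finset.card_range, (hf1 x hxF').1,
        hwX x hx]
  have hfD : ∀ z ∈ F, z ∉ K → (∃ x ∈ K, G.Adj z x) → f z = {α} := by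
    intro z hz hzK hex
    obtain ⟨x, hx, hzx⟩ : ∃ x ∈ X, G.Adj z x := by
      rcases hD z hz hzK hex with h | ⟨-, -, h⟩
      · exact hXdom z hz h hex
      · exact ⟨x₀, hx₀, h x₀ (hXK hx₀)⟩
    obtain ⟨h1, -, h3⟩ := hout z hz hzK
    obtain ⟨β, hβ⟩ := Finset.card_eq_one.1 h3
    have hd := hf2 z h1 x (Finset.mem_union.2 (Or.inr hx)) hzx
    have hβk := (hf1 z h1).2
    rw [hβ, hfX x hx, Finset.disjoint_singleton_left] at hd
    rw [hβ, Finset.singleton_subset_iff] at hβk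
    have : β = α := by
      by_contra hne
      exact hd (Finset.mem_erase.2 ⟨hne, hβk⟩)
    rw [hβ, this]
  have hKF : K ⊆ F := fun v hv => (hKm v hv).1
  have hKcl' : CliqueLE G K (k - 1) := by
    intro R hR hRc
    have hsR : s ∉ R := fun h => hsK (hR h)
    have := hk (insert s R) ?_ (clique_insert hRc fun v hv _ => (hKm v (hR hv)).2)
    · rw [Finset.card_insert_of_notMem hsR] at this; omega
    · intro v hv
      rcases Finset.mem_insert.1 hv with rfl | h
      · exact hs
      · exact hKF (hR h)
  obtain ⟨g, hg1, hg2⟩ := hF.2 K (Finset.ssubset_iff_subset_ne.2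
    ⟨hKF, fun h => hsK (h ▸ hs)⟩) _ subset_rfl _ hKcl'
  choose! h hh using fun v (hv : v ∈ F ∧ v ∉ K) => Finset.card_eq_one.1 (hout v hv.1 hv.2).2.2
  have hhD : ∀ z ∈ F, z ∉ K → (∃ x ∈ K, G.Adj z x) → h z = α := by
    intro z hz hzK hex
    have := hfD z hz hzK hex
    rwa [hh z ⟨hz, hzK⟩, Finset.singleton_inj] at this
  -- the colours of `K` are shifted so as to avoid `α`
  refine hcol ⟨fun v => if v ∈ K then (if g v < α then g v else g v + 1) else h v, ?_, ?_⟩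
  · intro v hv
    by_cases hvK : v ∈ K
    · have := hg1 v hvK
      simp only [hvK, if_true]
      split_ifs <;> omega
    · simp only [hvK, if_false]
      have := (hf1 v (hout v hv hvK).1).2
      rw [hh v ⟨hv, hvK⟩] at this
      simpa using this
  · intro x hx y hy hxy
    by_cases hxK : x ∈ K <;> by_cases hyK : y ∈ K <;> simp only [hxK, hyK, if_true, if_false]
    · have := hg2 x hxK y hyK hxy
      split_ifs <;> omega
    · rw [hhD y hy hyK ⟨x, hxK, hxy.symm⟩]
      split_ifs <;> omega
    · rw [hhD x hx hxK ⟨y, hyK, hxy⟩]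
      split_ifs <;> omega
    · intro heq
      have := hf2 x (hout x hx hxK).1 y (hout y hy hyK).1 hxy
      rw [hh x ⟨hx, hxK⟩, hh y ⟨hy, hyK⟩, heq] at this
      simp at this

/-! ### A vertex whose non-neighbours induce a perfect graph -/

/-- The vertices of `T` other than `v` that are not adjacent to `v`. -/
noncomputable def nonNbrs (G : SimpleGraph V) (T : Finset V) (v : V) : Finset V := by
  classical exact T.filter fun x => x ≠ v ∧ ¬ G.Adj v x

lemma mem_nonNbrs {G : SimpleGraph V} {T : Finset V} {v x : V} :
    x ∈ nonNbrs G T v ↔ x ∈ T ∧ x ≠ v ∧ ¬ G.Adj v x := by simp [nonNbrs]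

/-- An imperfect set of non-neighbours of `v` contains an odd hole that is minimally imperfect;
no other minimally imperfect graph survives, by `exists_attach` and `no_stable_attach`. -/
lemma exists_hole {G : SimpleGraph V} (hb : NoBull G) {T : Finset V} (hT : PrimeOn G T) {v : V}
    (hv : v ∈ T) (hM : ¬ Perf G (nonNbrs G T v)) :
    ∃ F ⊆ T, MinImp G F ∧ v ∉ F ∧ (∀ x ∈ F, ¬ G.Adj v x) ∧ ∃ k c, IsOddHole G F k c := by
  obtain ⟨F, hFM, hF⟩ := exists_minImp _ hM
  have hFm : ∀ x ∈ F, x ∈ T ∧ x ≠ v ∧ ¬ G.Adj v x := fun x hx => mem_nonNbrs.1 (hFM hx)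
  have hvF : v ∉ F := fun h => (hFm v h).2.1 rfl
  have hFT : F ⊆ T := fun x hx => (hFm x hx).1
  refine ⟨F, hFT, hF, hvF, fun x hx => (hFm x hx).2.2, ?_⟩
  by_contra! hno
  obtain ⟨u, -, a, -, -, -, -, -, h1, h2⟩ := exists_attach hb hT hFT hF.primeOn hF.nonSplit hv hvF
    fun x hx => (hFm x hx).2.2
  exact no_stable_attach hb hF hno h1 h2

lemma torch_contra {G : SimpleGraph V} (hH : OddTorchFree G) {F : Finset V} {k : ℕ}
    {c : Fin k → V} (hc : IsOddHole G F k c) {u a : V} (hu : u ∉ F) (ha : a ∉ F)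
    (hau : G.Adj a u) (haF : ∀ x ∈ F, ¬ G.Adj a x) (h1 : ∃ i, G.Adj u (c i))
    (h2 : ∀ x ∈ F, ∀ y ∈ F, G.Adj u x → G.Adj u y → ¬ G.Adj x y) : False := by
  obtain ⟨h5, hodd, hinj, hcF, hadj⟩ := hc
  refine hH k {i | G.Adj u (c i)} h5 hodd h1 ?_ ?_
  · intro i hi j hj hij
    exact h2 _ (hcF i) _ (hcF j) hi hj ((hadj i j).2 hij)
  have hcu : ∀ i, c i ≠ u := fun i h => hu (h ▸ hcF i)
  have hca : ∀ i, c i ≠ a := fun i h => ha (h ▸ hcF i)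
  have hai : ∀ i, ¬ G.Adj a (c i) := fun i => haF _ (hcF i)
  have hai' : ∀ i, ¬ G.Adj (c i) a := fun i h => hai i h.symm
  refine ⟨⟨Sum.elim c ![u, a], ?_⟩, ?_⟩
  · rintro (i | i) (j | j) h
    · simpa using hinj h
    · fin_cases j
      · exact absurd h (hcu i)
      · exact absurd h (hca i)
    · fin_cases i
      · exact absurd h.symm (hcu j)
      · exact absurd h.symm (hca j)
    · fin_cases i <;> fin_cases j <;> simp_all [hau.ne, hau.ne']
  · intro x y
    change G.Adj (Sum.elim c ![u, a] x) (Sum.elim c ![u, a] y) ↔ _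
    rcases x with i | i <;> rcases y with j | j
    · simp only [oddTorch, fromRel_adj, Sum.elim_inl, hadj, ne_eq, Sum.inl.injEq]
      constructor
      · exact fun h => ⟨h.ne, Or.inl h⟩
      · rintro ⟨-, h | h⟩
        exacts [h, h.symm]
    · fin_cases j
      · simp [oddTorch, G.adj_comm]
      · simp [oddTorch, hai']
    · fin_cases i <;> simp [oddTorch, hai]
    · fin_cases i <;> fin_cases j <;> simp [oddTorch, hau, hau.symm]

/-- `G` has no four pairwise non-adjacent vertices. -/
def No4 (G : SimpleGraph V) : Prop :=
  ∀ p q r s : V, p ≠ q → p ≠ r → p ≠ s → q ≠ r → q ≠ s → r ≠ s →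
    ¬ G.Adj p q → ¬ G.Adj p r → ¬ G.Adj p s → ¬ G.Adj q r → ¬ G.Adj q s → ¬ G.Adj r s → False

lemma stable_pentagon {P : Fin 5 → Prop} (h : ∀ a b, P a → P b → ¬ (cycleGraph 5).Adj a b) :
    ∃ i, ∀ a, P a → a = i ∨ a = i + 2 := by
  classical
  have key : ∀ S : Finset (Fin 5), (∀ a ∈ S, ∀ b ∈ S, ¬ (cycleGraph 5).Adj a b) →
      ∃ i, ∀ a ∈ S, a = i ∨ a = i + 2 := by decide
  obtain ⟨i, hi⟩ := key (Finset.univ.filter P) (by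
    intro a ha b hb
    simp only [Finset.mem_filter, Finset.mem_univ, true_and] at ha hb
    exact h a b ha hb)
  exact ⟨i, fun a ha => hi a (by simpa using ha)⟩

/-- Two non-adjacent vertices outside a pentagon hit every non-adjacent pair of the pentagon. -/
lemma No4.pentagon {G : SimpleGraph V} (h4 : No4 G) {F : Finset V} {c : Fin 5 → V}
    (hc : IsOddHole G F 5 c) {p q : V} (hpq : p ≠ q) (hn : ¬ G.Adj p q) (hp : ∀ i, c i ≠ p)
    (hq : ∀ i, c i ≠ q) (a : Fin 5) :
    G.Adj p (c a) ∨ G.Adj p (c (a + 2)) ∨ G.Adj q (c a) ∨ G.Adj q (c (a + 2)) := by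
  obtain ⟨-, -, hinj, -, hadj⟩ := hc
  by_contra! hcon
  obtain ⟨h1, h2, h3, h4'⟩ := hcon
  have n1 : ∀ a : Fin 5, a ≠ a + 2 := by decide
  have n2 : ∀ a : Fin 5, ¬ (cycleGraph 5).Adj a (a + 2) := by decide
  exact h4 p q (c a) (c (a + 2)) hpq (hp _).symm (hp _).symm (hq _).symm (hq _).symm
    (fun h => n1 a (hinj h)) hn h1 h2 h3 h4' (fun h => n2 a ((hadj _ _).1 h))

/-- Without `4K₁`, the odd hole among the non-neighbours of `v` is a pentagon, and `v` is its only
anticentre. -/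
lemma exists_pentagon {G : SimpleGraph V} (hb : NoBull G) (h4 : No4 G) {T : Finset V}
    (hT : PrimeOn G T) {v : V} (hv : v ∈ T) (hM : ¬ Perf G (nonNbrs G T v)) :
    ∃ c : Fin 5 → V, IsOddHole G T 5 c ∧ (∀ i, c i ≠ v ∧ ¬ G.Adj v (c i)) ∧
      (∀ u ∈ T, G.Adj v u → (∃ i, G.Adj u (c i)) ∧
        ∃ i, ∀ a, G.Adj u (c a) → a = i ∨ a = i + 2) ∧ ∃ u ∈ T, G.Adj v u := by
  classical
  obtain ⟨F, hFT, hF, hvF, hvA, k, c, hc⟩ := exists_hole hb hT hv hM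
  have hk : k = 5 := by
    obtain ⟨h5, hodd, hinj, hcF, hadj⟩ := hc
    by_contra hne
    have h7 : 7 ≤ k := by obtain ⟨m, hm⟩ := hodd; omega
    have hn : ∀ i j : Fin k, i.val + 2 ≤ j.val → j.val ≤ 4 → c i ≠ c j ∧ ¬ G.Adj (c i) (c j) := by
      intro i j hij hj
      rw [hadj, cyc_adj (by omega)]
      exact ⟨fun h => by have := hinj h; subst this; omega, by omega⟩
    have h02 := hn ⟨0, by omega⟩ ⟨2, by omega⟩ (by simp) (by simp)
    have h04 := hn ⟨0, by omega⟩ ⟨4, by omega⟩ (by simp) (by simp)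
    have h24 := hn ⟨2, by omega⟩ ⟨4, by omega⟩ (by simp) (by simp)
    have hvne : ∀ i, v ≠ c i := fun i h => hvF (h ▸ hcF i)
    exact h4 v _ _ _ (hvne _) (hvne _) (hvne _) h02.1 h04.1 h24.1 (hvA _ (hcF _)) (hvA _ (hcF _))
      (hvA _ (hcF _)) h02.2 h04.2 h24.2
  subst hk
  have hFc : ∀ x ∈ F, ∃ i, c i = x := by
    intro x hx; rw [hF.eq_image hc] at hx; simpa using hx
  have hcF := hc.2.2.2.1
  have hadj := hc.2.2.2.2
  have hstF : ∀ u, (∀ x ∈ F, ∀ y ∈ F, G.Adj u x → G.Adj u y → ¬ G.Adj x y) →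
      ∃ i, ∀ a, G.Adj u (c a) → a = i ∨ a = i + 2 := fun u h =>
    stable_pentagon fun a b ha hb' hab => h _ (hcF a) _ (hcF b) ha hb' ((hadj a b).2 hab)
  have hsoc : ∀ a u, u ∈ T → G.Adj a u → (∀ x ∈ F, ¬ G.Adj a x) →
      ∀ x ∈ F, ∀ y ∈ F, G.Adj u x → G.Adj u y → ¬ G.Adj x y := fun a u huT hau haA =>
    (stable_or_complete hb hF.primeOn hau haA).resolve_right fun h =>
      no_center_anticenter hb hT hFT hF.primeOn hF.nonSplit huT h hv hvF hvA
  set B := T.filter fun x => x ∉ F ∧ ∀ y ∈ F, ¬ G.Adj x y with hB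
  have hBm : ∀ x, x ∈ B ↔ x ∈ T ∧ x ∉ F ∧ ∀ y ∈ F, ¬ G.Adj x y := fun x => by simp [hB]
  have hmod : IsMod G T B := by
    refine ⟨Finset.filter_subset _ _, fun z hz hzB => ?_⟩
    by_cases hex : ∃ b ∈ B, G.Adj z b
    · left
      obtain ⟨b, hbB, hzb⟩ := hex
      have hbB' := (hBm b).1 hbB
      have hzF : z ∉ F := fun h => hbB'.2.2 z h hzb.symm
      obtain ⟨i, hi⟩ := hstF z (hsoc b z hz hzb.symm hbB'.2.2)
      intro b' hb'
      by_contra hzb'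
      have hb'' := (hBm b').1 hb'
      have e1 : ∀ i : Fin 5, i + 1 ≠ i ∧ i + 1 ≠ i + 2 ∧ i + 1 + 2 ≠ i ∧ i + 1 + 2 ≠ i + 2 := by
        decide
      obtain ⟨e2, e3, e4, e5⟩ := e1 i
      rcases h4.pentagon hc (p := z) (q := b') (fun h => hzB (h ▸ hb')) hzb'
        (fun i h => hzF (h ▸ hcF i)) (fun i h => hb''.2.1 (h ▸ hcF i)) (i + 1) with h | h | h | h
      · exact (hi _ h).elim e2 e3
      · exact (hi _ h).elim e4 e5
      · exact hb''.2.2 _ (hcF _) h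
      · exact hb''.2.2 _ (hcF _) h
    · right
      intro y hy h
      exact hex ⟨y, hy, h⟩
  have hBv : ∀ x ∈ B, x = v := by
    intro x hx
    by_contra hne
    have := hT B hmod (Finset.one_lt_card.2 ⟨x, hx, v, (hBm v).2 ⟨hv, hvF, hvA⟩, hne⟩)
    have h0 : c 0 ∈ B := this ▸ hFT (hcF 0)
    exact ((hBm _).1 h0).2.1 (hcF 0)
  refine ⟨c, ⟨hc.1, hc.2.1, hc.2.2.1, fun i => hFT (hcF i), hadj⟩,
    fun i => ⟨fun h => hvF (h ▸ hcF i), hvA _ (hcF i)⟩, ?_, ?_⟩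
  · intro u hu hvu
    have huF : u ∉ F := fun h => hvA u h hvu
    refine ⟨?_, hstF u (hsoc v u hu hvu hvA)⟩
    by_contra! hno
    have : u ∈ B := (hBm u).2 ⟨hu, huF, fun y hy => by
      obtain ⟨i, rfl⟩ := hFc y hy; exact hno i⟩
    exact hvu.ne (hBv u this).symm
  · obtain ⟨u, hu, a, ha, -, haF, hau, haA, -, -⟩ :=
      exists_attach hb hT hFT hF.primeOn hF.nonSplit hv hvF hvA
    exact ⟨u, hu, hBv a ((hBm a).2 ⟨ha, haF, haA⟩) ▸ hau⟩

lemma exists_perf_nonNbrs {G : SimpleGraph V} (hb : NoBull G) (hH : OddTorchFree G ∨ No4 G)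
    {T : Finset V} (hT : PrimeOn G T) (hne : T.Nonempty) : ∃ v ∈ T, Perf G (nonNbrs G T v) := by
  by_contra! hcon
  obtain ⟨v, hv⟩ := hne
  rcases hH with hH | h4
  · obtain ⟨F, hFT, hF, hvF, hvA, k, c, hc⟩ := exists_hole hb hT hv (hcon v hv)
    obtain ⟨u, -, a, -, huF, haF, hau, haA, ⟨x, hx, hux⟩, hst⟩ :=
      exists_attach hb hT hFT hF.primeOn hF.nonSplit hv hvF hvA
    rw [hF.eq_image hc] at hx
    obtain ⟨i, -, rfl⟩ := Finset.mem_image.1 hx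
    exact torch_contra hH hc huF haF hau haA ⟨i, hux⟩ hst
  -- every neighbour `w` of `v` has only one neighbour on the pentagon of `v`
  obtain ⟨c, hc, hcv, hcN, u, hu, hvu⟩ := exists_pentagon hb h4 hT hv (hcon v hv)
  have huniq : ∀ w ∈ T, G.Adj v w → ∀ i j, G.Adj w (c i) → G.Adj w (c j) → i = j := by
    intro w hw hvw i j hi hj
    by_contra hij
    obtain ⟨d, hd, hdw, hdN, -⟩ := exists_pentagon hb h4 hT hw (hcon w hw)
    have hcT := hc.2.2.2.1
    have hcij : ¬ G.Adj (c i) (c j) := by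
      obtain ⟨l, hl⟩ := (hcN w hw hvw).2
      rw [hc.2.2.2.2]
      have n2 : ∀ l i j : Fin 5, (i = l ∨ i = l + 2) → (j = l ∨ j = l + 2) →
          ¬ (cycleGraph 5).Adj i j := by decide
      exact n2 l i j (hl i hi) (hl j hj)
    have hdne : ∀ x, G.Adj w x → ∀ i, d i ≠ x := fun x hx i h => (hdw i).2 (h ▸ hx)
    obtain ⟨l₁, h1⟩ := (hdN v hv hvw.symm).2
    obtain ⟨l₂, h2⟩ := (hdN (c i) (hcT i) hi).2
    obtain ⟨l₃, h3⟩ := (hdN (c j) (hcT j) hj).2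
    have e12 := h4.pentagon hd (hcv i).1.symm (hcv i).2 (hdne _ hvw.symm) (hdne _ hi)
    have e13 := h4.pentagon hd (hcv j).1.symm (hcv j).2 (hdne _ hvw.symm) (hdne _ hj)
    have e23 := h4.pentagon hd (fun h => hij (hc.2.2.1 h)) hcij (hdne _ hi) (hdne _ hj)
    -- no three diagonals of a pentagon are such that any two of them meet every diagonal
    have key : ∀ l₁ l₂ l₃ : Fin 5,
        (∀ a, (a = l₁ ∨ a = l₁ + 2) ∨ (a + 2 = l₁ ∨ a + 2 = l₁ + 2) ∨
          (a = l₂ ∨ a = l₂ + 2) ∨ (a + 2 = l₂ ∨ a + 2 = l₂ + 2)) →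
        (∀ a, (a = l₁ ∨ a = l₁ + 2) ∨ (a + 2 = l₁ ∨ a + 2 = l₁ + 2) ∨
          (a = l₃ ∨ a = l₃ + 2) ∨ (a + 2 = l₃ ∨ a + 2 = l₃ + 2)) →
        (∀ a, (a = l₂ ∨ a = l₂ + 2) ∨ (a + 2 = l₂ ∨ a + 2 = l₂ + 2) ∨
          (a = l₃ ∨ a = l₃ + 2) ∨ (a + 2 = l₃ ∨ a + 2 = l₃ + 2)) → False := by decide
    exact key l₁ l₂ l₃ (fun a => (e12 a).imp (h1 _) (Or.imp (h1 _) (Or.imp (h2 _) (h2 _))))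
      (fun a => (e13 a).imp (h1 _) (Or.imp (h1 _) (Or.imp (h3 _) (h3 _))))
      (fun a => (e23 a).imp (h2 _) (Or.imp (h2 _) (Or.imp (h3 _) (h3 _))))
  have hclique : ∀ w ∈ T, ∀ w' ∈ T, G.Adj v w → G.Adj v w' → w ≠ w' → G.Adj w w' := by
    intro w hw w' hw' hvw hvw' hww
    by_contra hn
    obtain ⟨i, hi⟩ := (hcN w hw hvw).1
    obtain ⟨j, hj⟩ := (hcN w' hw' hvw').1
    have key : ∀ i j : Fin 5, ∃ a, a ≠ i ∧ a + 2 ≠ i ∧ a ≠ j ∧ a + 2 ≠ j := by decide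
    obtain ⟨a, a1, a2, a3, a4⟩ := key i j
    have hcne : ∀ x, G.Adj v x → ∀ i, c i ≠ x := fun x hx i h => (hcv i).2 (h ▸ hx)
    rcases h4.pentagon hc hww hn (hcne w hvw) (hcne w' hvw') a with h | h | h | h
    · exact a1 (huniq w hw hvw _ _ h hi)
    · exact a2 (huniq w hw hvw _ _ h hi)
    · exact a3 (huniq w' hw' hvw' _ _ h hj)
    · exact a4 (huniq w' hw' hvw' _ _ h hj)
  -- the neighbour of `v` on the pentagon of `u` is not adjacent to `u`
  obtain ⟨d, hd, hdu, hdN, -⟩ := exists_pentagon hb h4 hT hu (hcon u hu)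
  obtain ⟨i, hi⟩ := (hdN v hv hvu.symm).1
  exact (hdu i).2 (hclique u hu (d i) (hd.2.2.2.1 i) hvu hi (hdu i).1.symm)

/-! ### Perfect weight divisibility and the colouring -/

lemma Perf.insert_isolated {G : SimpleGraph V} {P : Finset V} {v : V} (hP : Perf G P)
    (hv : ∀ x ∈ P, ¬ G.Adj v x) : Perf G (insert v P) := by
  classical
  intro T hT k hk
  have hvT : ∀ x ∈ T, x ≠ v → x ∈ P := fun x hx hne => (Finset.mem_insert.1 (hT hx)).resolve_left hne
  have hiso : ∀ x ∈ T, ¬ G.Adj v x := by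
    intro x hx h
    exact hv x (hvT x hx h.ne') h
  obtain ⟨f, hf1, hf2⟩ := hP (T.erase v)
    (fun x hx => hvT x (Finset.mem_of_mem_erase hx) (Finset.ne_of_mem_erase hx)) k
    (hk.mono (Finset.erase_subset _ _))
  refine ⟨Function.update f v 0, ?_, ?_⟩
  · intro x hx
    by_cases hxv : x = v
    · subst hxv
      have := hk {x} (by simpa using hx) (by simp)
      simp only [Finset.card_singleton] at this
      rw [Function.update_self]
      omega
    · rw [Function.update_of_ne hxv]
      exact hf1 x (Finset.mem_erase.2 ⟨hxv, hx⟩)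
  · intro x hx y hy hxy
    have hxv : x ≠ v := fun h => hiso y hy (h ▸ hxy)
    have hyv : y ≠ v := fun h => hiso x hx (h ▸ hxy.symm)
    rw [Function.update_of_ne hxv, Function.update_of_ne hyv]
    exact hf2 x (Finset.mem_erase.2 ⟨hxv, hx⟩) y (Finset.mem_erase.2 ⟨hyv, hy⟩) hxy

/-- For all positive weights, `G[T]` has a perfect part whose removal lowers the largest weight of
a clique. In the inductive step a homogeneous set is contracted to one vertex, which receives the
largest weight of a clique of the set. -/
lemma weight_divisible {G : SimpleGraph V} (hb : NoBull G) (hH : OddTorchFree G ∨ No4 G)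
    (T : Finset V) : ∀ w : V → ℕ, (∀ v, 0 < w v) → T.Nonempty →
      ∃ P ⊆ T, Perf G P ∧ ∀ k, WLE G w T (k + 1) → WLE G w (T \ P) k := by
  classical
  induction T using Finset.strongInduction with
  | H T ih =>
  intro w hw hne
  by_cases hT : PrimeOn G T
  · obtain ⟨v, hv, hP⟩ := exists_perf_nonNbrs hb hH hT hne
    refine ⟨insert v (nonNbrs G T v), ?_,
      hP.insert_isolated fun x hx => (mem_nonNbrs.1 hx).2.2, fun k hk Q hQ hQc => ?_⟩
    · rw [Finset.insert_subset_iff]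
      exact ⟨hv, fun x hx => (mem_nonNbrs.1 hx).1⟩
    have hQm : ∀ x ∈ Q, x ∈ T ∧ x ≠ v ∧ G.Adj v x := by
      intro x hx
      have := hQ hx
      simp only [Finset.mem_sdiff, Finset.mem_insert, mem_nonNbrs, not_or, not_and, not_not] at this
      exact ⟨this.1, this.2.1, this.2.2 this.1 this.2.1⟩
    have hvQ : v ∉ Q := fun h => (hQm v h).2.1 rfl
    have := hk (insert v Q) (Finset.insert_subset hv fun x hx => (hQm x hx).1)
      (clique_insert hQc fun x hx _ => (hQm x hx).2.2)
    rw [Finset.sum_insert hvQ] at this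
    have := hw v
    omega
  simp only [PrimeOn, not_forall] at hT
  obtain ⟨Y, ⟨hYT, hYm⟩, hY2, hYne⟩ := hT
  obtain ⟨y, y', hy, hy', hyy⟩ : ∃ y y', y ∈ Y ∧ y' ∈ Y ∧ y ≠ y' := by
    obtain ⟨y, hy, y', hy', h⟩ := Finset.one_lt_card.1 hY2
    exact ⟨y, y', hy, hy', h⟩
  obtain ⟨R, hRY, hRc, hRmax⟩ := exists_max_clique G w Y
  set m := ∑ v ∈ R, w v with hm
  have hmpos : 0 < m := by
    have := hRmax {y} (by simpa using hy) (by simp)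
    simp at this
    have := hw y
    omega
  set w' := Function.update w y m with hw'
  have hw'pos : ∀ v, 0 < w' v := by
    intro v
    by_cases h : v = y
    · subst h; simpa [hw'] using hmpos
    · simpa [hw', h] using hw v
  set T' := insert y (T \ Y) with hT'
  have hT'T : T' ⊆ T := Finset.insert_subset (hYT hy) Finset.sdiff_subset
  have hT'm : ∀ x, x ∈ T' ↔ x = y ∨ x ∈ T ∧ x ∉ Y := by simp [hT']
  have hT'ss : T' ⊂ T := by
    refine Finset.ssubset_iff_subset_ne.2 ⟨hT'T, fun h => ?_⟩
    have : y' ∈ T' := h ▸ hYT hy'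
    rcases (hT'm _).1 this with h | h
    · exact hyy h.symm
    · exact h.2 hy'
  have hadj : ∀ x ∈ T, x ∉ Y → ∀ z ∈ Y, G.Adj x z ↔ G.Adj x y := by
    intro x hx hxY z hz
    rcases hYm x hx hxY with h | h
    · exact ⟨fun _ => h y hy, fun _ => h z hz⟩
    · exact ⟨fun h' => (h z hz h').elim, fun h' => (h y hy h').elim⟩
  obtain ⟨P', hP'T, hP', hP'w⟩ := ih T' hT'ss w' hw'pos ⟨y, (hT'm y).2 (Or.inl rfl)⟩
  have hsumne : ∀ Q : Finset V, y ∉ Q → ∑ v ∈ Q, w' v = ∑ v ∈ Q, w v := by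
    intro Q hQ
    refine Finset.sum_congr rfl fun v hv => ?_
    have : v ≠ y := fun h => hQ (h ▸ hv)
    simp [hw', this]
  have hsumins : ∀ Q : Finset V, y ∉ Q → ∑ v ∈ insert y Q, w' v = m + ∑ v ∈ Q, w v := by
    intro Q hQ
    rw [Finset.sum_insert hQ, hsumne Q hQ]
    simp only [hw', Function.update_self]
  -- replacing `y` by a heaviest clique of `Y` shows that contraction does not raise clique weights
  have hT'w : ∀ k, WLE G w T k → WLE G w' T' k := by
    intro k hk Q hQ hQc
    by_cases hyQ : y ∈ Q
    · have hE : ∀ x ∈ Q.erase y, x ∈ Q ∧ x ≠ y ∧ x ∈ T ∧ x ∉ Y := by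
        intro x hx
        have h1 := Finset.mem_erase.1 hx
        exact ⟨h1.2, h1.1, ((hT'm x).1 (hQ h1.2)).resolve_left h1.1⟩
      rw [← Finset.insert_erase hyQ, hsumins _ (Finset.notMem_erase _ _), hm,
        ← Finset.sum_union (Finset.disjoint_left.2 fun x hx hx' => (hE x hx').2.2.2 (hRY hx))]
      refine hk _ ?_ ?_
      · intro x hx
        rcases Finset.mem_union.1 hx with h | h
        · exact hYT (hRY h)
        · exact (hE x h).2.2.1
      · have cross : ∀ a ∈ R, ∀ b ∈ Q.erase y, G.Adj b a := by
          intro a ha b hb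
          obtain ⟨h1, h2, h3, h4⟩ := hE b hb
          exact (hadj b h3 h4 a (hRY ha)).2 (hQc h1 hyQ h2)
        intro a ha b hb hab
        rcases Finset.mem_union.1 ha with h | h <;> rcases Finset.mem_union.1 hb with h' | h'
        · exact hRc h h' hab
        · exact (cross a h b h').symm
        · exact cross b h' a h
        · exact hQc (hE a h).1 (hE b h').1 hab
    · rw [hsumne Q hyQ]
      exact hk Q (hQ.trans hT'T) hQc
  by_cases hyP : y ∈ P'
  · obtain ⟨PY, hPYY, hPY, hPYw⟩ := ih Y (Finset.ssubset_iff_subset_ne.2 ⟨hYT, hYne⟩) w hw ⟨y, hy⟩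
    have hP'm : ∀ x ∈ P', x ≠ y → x ∈ T ∧ x ∉ Y := fun x hx hxy =>
      ((hT'm x).1 (hP'T hx)).resolve_left hxy
    refine ⟨P'.erase y ∪ PY, ?_, substitution hP' hyP hPY fun p hp hpy z hz =>
      hadj p (hP'm p hp hpy).1 (hP'm p hp hpy).2 z (hPYY hz), fun k hk Q hQ hQc => ?_⟩
    · exact Finset.union_subset ((Finset.erase_subset _ _).trans (hP'T.trans hT'T)) (hPYY.trans hYT)
    have hQm : ∀ x ∈ Q, x ∈ T ∧ (x ∈ P' → x = y) ∧ x ∉ PY := by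
      intro x hx
      have := hQ hx
      simp only [Finset.mem_sdiff, Finset.mem_union, Finset.mem_erase, not_or, not_and] at this
      exact ⟨this.1, fun h => by_contra fun h' => this.2.1 h' h, this.2.2⟩
    have hk' := hT'w _ hk
    set Q1 := Q.filter fun x => x ∉ Y with hQ1
    set Q2 := Q.filter fun x => x ∈ Y with hQ2
    have hsplit : ∑ v ∈ Q2, w v + ∑ v ∈ Q1, w v = ∑ v ∈ Q, w v :=
      Finset.sum_filter_add_sum_filter_not Q (fun x => x ∈ Y) w
    have hyQ1 : y ∉ Q1 := by simp [hQ1, hy]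
    have hQ1m : ∀ x ∈ Q1, x ∈ Q ∧ x ∉ Y := fun x hx => by simpa [hQ1] using hx
    have hQ2m : ∀ x ∈ Q2, x ∈ Q ∧ x ∈ Y := fun x hx => by simpa [hQ2] using hx
    rcases Q2.eq_empty_or_nonempty with h2 | ⟨z, hz⟩
    · -- a clique that avoids `Y` survives in the contracted graph
      rw [h2, Finset.sum_empty, zero_add] at hsplit
      rw [← hsplit, ← hsumne Q1 hyQ1]
      refine hP'w k hk' Q1 (fun x hx => ?_) (hQc.subset fun x hx => (hQ1m x hx).1)
      obtain ⟨h3, h4⟩ := hQ1m x hx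
      rw [Finset.mem_sdiff, hT'm]
      exact ⟨Or.inr ⟨(hQm x h3).1, h4⟩, fun h => h4 ((hQm x h3).2.1 h ▸ hy)⟩
    · -- inside `Y` the clique is lighter than a heaviest clique of `Y`
      have hlt : ∑ v ∈ Q2, w v ≤ m - 1 :=
        hPYw (m - 1) (by rwa [Nat.sub_add_cancel hmpos]) Q2
          (fun x hx => Finset.mem_sdiff.2 ⟨(hQ2m x hx).2, (hQm x (hQ2m x hx).1).2.2⟩)
          (hQc.subset fun x hx => (hQ2m x hx).1)
      have := hk' (insert y Q1)
        (Finset.insert_subset ((hT'm y).2 (Or.inl rfl)) fun x hx =>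
          (hT'm x).2 (Or.inr ⟨(hQm x (hQ1m x hx).1).1, (hQ1m x hx).2⟩))
        (clique_insert (hQc.subset fun x hx => (hQ1m x hx).1) fun x hx _ => by
          obtain ⟨h3, h4⟩ := hQ1m x hx
          obtain ⟨h5, h6⟩ := hQ2m z hz
          exact ((hadj x (hQm x h3).1 h4 z h6).1 (hQc h3 h5 fun h => h4 (h ▸ h6))).symm)
      rw [hsumins Q1 hyQ1] at this
      omega
  · refine ⟨P', hP'T.trans hT'T, hP', fun k hk Q hQ hQc => ?_⟩
    have hk' := hT'w _ hk
    have hQm : ∀ x ∈ Q, x ∈ T ∧ x ∉ P' := fun x hx => Finset.mem_sdiff.1 (hQ hx)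
    set Q1 := Q.filter fun x => x ∉ Y with hQ1
    set Q2 := Q.filter fun x => x ∈ Y with hQ2
    have hsplit : ∑ v ∈ Q2, w v + ∑ v ∈ Q1, w v = ∑ v ∈ Q, w v :=
      Finset.sum_filter_add_sum_filter_not Q (fun x => x ∈ Y) w
    have hyQ1 : y ∉ Q1 := by simp [hQ1, hy]
    have hQ1m : ∀ x ∈ Q1, x ∈ Q ∧ x ∉ Y := fun x hx => by simpa [hQ1] using hx
    have hQ2m : ∀ x ∈ Q2, x ∈ Q ∧ x ∈ Y := fun x hx => by simpa [hQ2] using hx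
    have hQ1T : ∀ x ∈ Q1, x ∈ T' \ P' := fun x hx => by
      rw [Finset.mem_sdiff, hT'm]
      exact ⟨Or.inr ⟨(hQm x (hQ1m x hx).1).1, (hQ1m x hx).2⟩, (hQm x (hQ1m x hx).1).2⟩
    rcases Q2.eq_empty_or_nonempty with h2 | ⟨z, hz⟩
    · rw [h2, Finset.sum_empty, zero_add] at hsplit
      rw [← hsplit, ← hsumne Q1 hyQ1]
      exact hP'w k hk' Q1 hQ1T (hQc.subset fun x hx => (hQ1m x hx).1)
    · have hle : ∑ v ∈ Q2, w v ≤ m :=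
        hRmax Q2 (fun x hx => (hQ2m x hx).2) (hQc.subset fun x hx => (hQ2m x hx).1)
      have := hP'w k hk' (insert y Q1)
        (Finset.insert_subset (Finset.mem_sdiff.2 ⟨(hT'm y).2 (Or.inl rfl), hyP⟩) hQ1T)
        (clique_insert (hQc.subset fun x hx => (hQ1m x hx).1) fun x hx _ => by
          obtain ⟨h3, h4⟩ := hQ1m x hx
          obtain ⟨h5, h6⟩ := hQ2m z hz
          exact ((hadj x (hQm x h3).1 h4 z h6).1 (hQc h3 h5 fun h => h4 (h ▸ h6))).symm)
      rw [hsumins Q1 hyQ1] at this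
      omega

lemma colOn_choose {G : SimpleGraph V} (hb : NoBull G) (hH : OddTorchFree G ∨ No4 G) (k : ℕ) :
    ∀ T : Finset V, CliqueLE G T k → ColOn G T (Nat.choose (k + 1) 2) := by
  classical
  induction k with
  | zero =>
    intro T hT
    have : ∀ v, v ∉ T := fun v hv => by
      have := hT {v} (by simpa using hv) (by simp)
      simp at this
    exact ⟨fun _ => 0, fun v hv => (this v hv).elim, fun v hv => (this v hv).elim⟩
  | succ k ih =>
    intro T hT
    rcases T.eq_empty_or_nonempty with rfl | hne
    · exact ⟨fun _ => 0, by simp, by simp⟩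
    obtain ⟨P, hPT, hP, hPw⟩ := weight_divisible hb hH T (fun _ => 1) (by simp) hne
    obtain ⟨f, hf1, hf2⟩ := ih _ (wle_one.1 (hPw k (wle_one.2 hT)))
    obtain ⟨g, hg1, hg2⟩ := hP P subset_rfl (k + 1) (hT.mono hPT)
    have hch : Nat.choose (k + 1 + 1) 2 = (k + 1) + Nat.choose (k + 1) 2 := by
      rw [Nat.choose_succ_succ' (k + 1) 1, Nat.choose_one_right]
    refine ⟨fun v => if v ∈ P then g v else (k + 1) + f v, fun v hv => ?_, fun x hx y hy hxy => ?_⟩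
    · by_cases hvP : v ∈ P
      · have := hg1 v hvP
        simp only [hvP, if_true]; omega
      · have := hf1 v (Finset.mem_sdiff.2 ⟨hv, hvP⟩)
        simp only [hvP, if_false]; omega
    · by_cases hxP : x ∈ P <;> by_cases hyP : y ∈ P <;> simp only [hxP, hyP, if_true, if_false]
      · exact hg2 x hxP y hyP hxy
      · have := hg1 x hxP
        omega
      · have := hg1 y hyP
        omega
      · have := hf2 x (Finset.mem_sdiff.2 ⟨hx, hxP⟩) y (Finset.mem_sdiff.2 ⟨hy, hyP⟩) hxy
        omega

lemma noBull_of_isFree {G : SimpleGraph V} (h : IsFree G bull) : NoBull G := by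
  intro p q r x y hpq hpr hqr hxp hyq hxq hxr hyp hyr hxy
  have e1 : x ≠ q := fun h => hxr (h ▸ hqr)
  have e2 : x ≠ r := fun h => hxq (h ▸ hqr.symm)
  have e3 : y ≠ p := fun h => hyr (h ▸ hpr)
  have e4 : y ≠ r := fun h => hyp (h ▸ hpr.symm)
  have e5 : x ≠ y := fun h => hyp (h ▸ hxp)
  have s1 := hpq.symm
  have s2 := hpr.symm
  have s3 := hqr.symm
  have s4 := hxp.symm
  have s5 := hyq.symm
  have hxq' : ¬ G.Adj q x := fun h => hxq h.symm
  have hxr' : ¬ G.Adj r x := fun h => hxr h.symm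
  have hyp' : ¬ G.Adj p y := fun h => hyp h.symm
  have hyr' : ¬ G.Adj r y := fun h => hyr h.symm
  have hxy' : ¬ G.Adj y x := fun h => hxy h.symm
  refine h ⟨⟨![p, q, r, x, y], ?_⟩, ?_⟩
  · intro i j hij
    fin_cases i <;> fin_cases j <;>
      simp_all [hpq.ne, hpr.ne, hqr.ne, hxp.ne, hyq.ne, hpq.ne', hpr.ne', hqr.ne', hxp.ne',
        hyq.ne', e1.symm, e2.symm, e3.symm, e4.symm, e5.symm]
  · intro i j
    change G.Adj (![p, q, r, x, y] i) (![p, q, r, x, y] j) ↔ _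
    fin_cases i <;> fin_cases j <;> simp [bull, *]

lemma no4_of_isFree {G : SimpleGraph V} (h : IsFree G (⊥ : SimpleGraph (Fin 4))) : No4 G := by
  intro p q r s h1 h2 h3 h4 h5 h6 n1 n2 n3 n4 n5 n6
  refine h ⟨⟨![p, q, r, s], ?_⟩, ?_⟩
  · intro i j hij
    fin_cases i <;> fin_cases j <;> simp_all
  · intro i j
    change G.Adj (![p, q, r, s] i) (![p, q, r, s] j) ↔ _
    have n1' : ¬ G.Adj q p := fun h => n1 h.symm
    have n2' : ¬ G.Adj r p := fun h => n2 h.symm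
    have n3' : ¬ G.Adj s p := fun h => n3 h.symm
    have n4' : ¬ G.Adj r q := fun h => n4 h.symm
    have n5' : ¬ G.Adj s q := fun h => n5 h.symm
    have n6' : ¬ G.Adj s r := fun h => n6 h.symm
    fin_cases i <;> fin_cases j <;> simp [*]

end BullBound

/-- For `H` an odd torch or `4K₁`, every (bull, H)-free graph `G` satisfies
`χ(G) ≤ (ω(G)+1 choose 2)`. -/
theorem bull_H_free_chromatic_bound {V : Type*} [Fintype V] (G : SimpleGraph V)
    (hbull : IsFree G bull)
    (hH : OddTorchFree G ∨ IsFree G (⊥ : SimpleGraph (Fin 4))) :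
    G.chromaticNumber ≤ ((Nat.choose (cliqueNumOn G Set.univ + 1) 2 : ℕ) : ℕ∞) := by
  classical
  have hcl : BullBound.CliqueLE G Finset.univ (cliqueNumOn G Set.univ) := by
    intro Q _ hQ
    refine le_csSup ⟨Fintype.card V, ?_⟩ ⟨Q, Set.subset_univ _, hQ, rfl⟩
    rintro n ⟨t, -, ht⟩
    exact ht.card_eq ▸ Finset.card_le_univ t
  obtain ⟨f, hf1, hf2⟩ := BullBound.colOn_choose (BullBound.noBull_of_isFree hbull)
    (hH.imp_right BullBound.no4_of_isFree) _ _ hcl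
  have hcol : G.Colorable (Nat.choose (cliqueNumOn G Set.univ + 1) 2) :=
    ⟨SimpleGraph.Coloring.mk (fun v => (⟨f v, hf1 v (Finset.mem_univ v)⟩ : Fin _)) fun h he =>
      hf2 _ (Finset.mem_univ _) _ (Finset.mem_univ _) h (congrArg Fin.val he)⟩
  exact hcol.chromaticNumber_le
end

section
/- Every (odd torch, C3)-free graph G satisfies χ(G) ≤ 3, i.e., every triangle-free graph containing no odd torch as an induced subgraph is 3-colorable. -/
/-!
Choose a root in every connected component of `G` and let `N` be the set of all neighbours of
roots. It is a stable set, because two adjacent vertices of `N` would form a triangle with their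
common root. So it suffices that `G - N` is bipartite.

If it is not, it has an odd closed walk, and a shortest one traces an induced odd cycle `C`
(`exists_induced_odd_cycle`: a repeated vertex or a chord splits the walk into two closed walks,
one of which is odd and shorter). As `G` is triangle-free, `C` is an odd hole. The root `r` of the
component containing `C` is not adjacent to `C` since `C` avoids `N`, and is not on `C` since
then its neighbours on `C` would lie in `N`. So a path from `r` to `C` must use an edge `vu` where
`u` has a neighbour on `C` and `v` has none (`not_reachable_hole`). The neighbours of `u` on `C`
form a stable set, since `G` is triangle-free, so `C`, `u` and `v` induce an odd torch.
-/

open SimpleGraph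

/-- The part of a walk between its `i`-th and `j`-th vertices. -/
lemma exists_walk_segment {V : Type*} {G : SimpleGraph V} {u v : V} (p : G.Walk u v) {i j : ℕ}
    (hij : i ≤ j) (hj : j ≤ p.length) :
    ∃ q : G.Walk (p.getVert i) (p.getVert j), q.length = j - i := by
  have h : (p.drop i).getVert (j - i) = p.getVert j := by
    rw [Walk.drop_getVert]; congr 1; omega
  refine ⟨((p.drop i).take (j - i)).copy rfl h, ?_⟩
  rw [Walk.length_copy, Walk.take_length, Walk.drop_length]
  omega

/-- A graph that is not bipartite contains an odd cycle of length at least three as an induced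
subgraph. -/
lemma exists_induced_odd_cycle {V : Type*} {G : SimpleGraph V} (h : ¬ G.Colorable 2) :
    ∃ (k : ℕ) (f : Fin k ↪ V), 3 ≤ k ∧ Odd k ∧
      ∀ a b, G.Adj (f a) (f b) ↔ (cycleGraph k).Adj a b := by
  classical
  have hex : ∃ n, Odd n ∧ ∃ u, ∃ p : G.Walk u u, p.length = n := by
    rw [two_colorable_iff_forall_loop_even] at h
    push Not at h
    obtain ⟨u, p, hp⟩ := h
    exact ⟨p.length, Nat.not_even_iff_odd.mp hp, u, p, rfl⟩
  obtain ⟨hodd, u, p, hlen⟩ := Nat.find_spec hex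
  have hmin : ∀ m, Odd m → ∀ v, ∀ q : G.Walk v v, q.length = m → Nat.find hex ≤ m :=
    fun m hm v q hq => Nat.find_min' hex ⟨hm, v, q, hq⟩
  generalize Nat.find hex = k at *
  -- Around the cycle there is also the segment from the `j`-th vertex back to the `i`-th.
  have hback : ∀ i j, i ≤ j → j ≤ k →
      ∃ q : G.Walk (p.getVert j) (p.getVert i), q.length = k - j + i := by
    intro i j hij hj
    obtain ⟨q₁, h₁⟩ := exists_walk_segment p (i := j) (j := k) hj hlen.ge
    obtain ⟨q₂, h₂⟩ := exists_walk_segment p (i := 0) (j := i) (by omega) (by omega)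
    have e : p.getVert k = p.getVert 0 := by rw [← hlen]; simp
    refine ⟨(q₁.copy rfl e).append q₂, ?_⟩
    simp only [Walk.length_append, Walk.length_copy]
    omega
  have hk1 : k ≠ 1 := by
    rintro rfl
    exact G.loopless.irrefl _ (Walk.adj_of_length_eq_one hlen)
  have hk : 3 ≤ k := by
    obtain ⟨m, hm⟩ := hodd
    omega
  have hinj : ∀ i j, i < j → j < k → p.getVert i ≠ p.getVert j := by
    intro i j hij hj he
    obtain ⟨q₁, h₁⟩ := exists_walk_segment p hij.le (by omega)
    obtain ⟨q₂, h₂⟩ := hback i j hij.le hj.le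
    have m₁ := fun ho => hmin _ ho _ (q₁.copy rfl he.symm) (by simpa using h₁)
    have m₂ := fun ho => hmin _ ho _ (q₂.copy rfl he) (by simpa using h₂)
    rcases Nat.even_or_odd (j - i) with ho | ho
    · have : Odd (k - j + i) := by grind
      have := m₂ this
      omega
    · have := m₁ ho
      omega
  have hchord : ∀ i j, i < j → j < k → G.Adj (p.getVert i) (p.getVert j) →
      j = i + 1 ∨ (i = 0 ∧ j + 1 = k) := by
    intro i j hij hj ha
    obtain ⟨q₁, h₁⟩ := exists_walk_segment p hij.le (by omega)
    obtain ⟨q₂, h₂⟩ := hback i j hij.le hj.le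
    have m₁ := fun ho => hmin (j - i + 1) ho _ (Walk.cons ha.symm q₁) (by simp [h₁])
    have m₂ := fun ho => hmin (k - j + i + 1) ho _ (Walk.cons ha q₂) (by simp [h₂])
    rcases Nat.even_or_odd (j - i) with ho | ho
    · have := m₁ ho.add_one
      omega
    · have : Odd (k - j + i + 1) := by grind
      have := m₂ this
      omega
  have hcyc : ∀ i j, i < j → j < k →
      (G.Adj (p.getVert i) (p.getVert j) ↔ j = i + 1 ∨ (i = 0 ∧ j + 1 = k)) := by
    intro i j hij hj
    refine ⟨hchord i j hij hj, ?_⟩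
    rintro (rfl | ⟨rfl, rfl⟩)
    · exact p.adj_getVert_succ (by omega)
    · have h1 := p.adj_getVert_succ (i := j) (by omega)
      have e : p.getVert (j + 1) = p.getVert 0 := by rw [← hlen]; simp
      rw [e] at h1
      exact h1.symm
  have hcg : ∀ a b : Fin k, a.val < b.val →
      ((cycleGraph k).Adj a b ↔ b.val = a.val + 1 ∨ (a.val = 0 ∧ b.val + 1 = k)) := by
    intro a b hab
    rw [cycleGraph_adj', Fin.coe_sub_iff_lt.mpr hab, Fin.sub_val_of_le hab.le]
    omega
  have hF : Function.Injective fun a : Fin k => p.getVert a := by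
    intro a b hab
    rcases lt_trichotomy a.val b.val with hlt | heq | hlt
    · exact absurd hab (hinj _ _ hlt b.2)
    · exact Fin.ext heq
    · exact absurd hab.symm (hinj _ _ hlt a.2)
  refine ⟨k, ⟨fun a => p.getVert a, hF⟩, hk, hodd, ?_⟩
  intro a b
  simp only [Function.Embedding.coeFn_mk]
  rcases lt_trichotomy a.val b.val with hlt | heq | hlt
  · rw [hcyc _ _ hlt b.2, hcg _ _ hlt]
  · obtain rfl := Fin.ext heq
    simp
  · rw [G.adj_comm, (cycleGraph k).adj_comm, hcyc _ _ hlt a.2, hcg _ _ hlt]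

lemma triangle_free {V : Type*} {G : SimpleGraph V} (hC3 : IsFree G (cycleGraph 3)) {a b c : V}
    (hab : G.Adj a b) (hbc : G.Adj b c) (hac : G.Adj a c) : False := by
  have hF : Function.Injective ![a, b, c] := by
    intro i j
    fin_cases i <;> fin_cases j <;>
      simp [hab.ne, hbc.ne, hac.ne, hab.ne', hbc.ne', hac.ne']
  refine hC3 ⟨⟨![a, b, c], hF⟩, ?_⟩
  rw [cycleGraph_three_eq_top]
  intro i j
  rw [Function.Embedding.coeFn_mk]
  fin_cases i <;> fin_cases j <;>
    simp [hab, hbc, hac, hab.symm, hbc.symm, hac.symm]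

/-- In a triangle-free graph without odd torches, a vertex outside an odd hole and with no
neighbour on it lies in another connected component. -/
lemma not_reachable_hole {V : Type*} {G : SimpleGraph V} (htorch : OddTorchFree G)
    (hC3 : IsFree G (cycleGraph 3)) {k : ℕ} (f : Fin k ↪ V) (hk : 5 ≤ k) (hodd : Odd k)
    (hf : ∀ a b, G.Adj (f a) (f b) ↔ (cycleGraph k).Adj a b) {r : V}
    (hr : r ∉ Set.range f) (hradj : ∀ i, ¬ G.Adj r (f i)) (i : Fin k) :
    ¬ G.Reachable r (f i) := by
  rintro ⟨w⟩
  obtain ⟨⟨⟨v, u⟩, hvu⟩, -, hv, hu⟩ := w.exists_boundary_dart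
    {x | x ∉ Set.range f ∧ ∀ i, ¬ G.Adj x (f i)} ⟨hr, hradj⟩ (fun h => h.1 ⟨i, rfl⟩)
  obtain ⟨hvC, hvadj⟩ := hv
  replace hvu : G.Adj v u := hvu
  replace hu : ¬ (u ∉ Set.range f ∧ ∀ i, ¬ G.Adj u (f i)) := hu
  have huC : u ∉ Set.range f := by
    rintro ⟨j, rfl⟩
    exact hvadj j hvu
  obtain ⟨j, hj⟩ : ∃ j, G.Adj u (f j) := by
    by_contra! hno
    exact hu ⟨huC, hno⟩
  refine htorch k {a | G.Adj u (f a)} hk hodd ⟨j, hj⟩ ?_ ?_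
  · intro a ha b hb hab
    exact triangle_free hC3 ha ((hf a b).mpr hab) hb
  refine ⟨⟨Sum.elim f ![u, v], ?_⟩, ?_⟩
  · refine Function.Injective.sumElim f.injective ?_ ?_
    · intro a b
      fin_cases a <;> fin_cases b <;> simp [hvu.ne, hvu.ne']
    · intro a b
      fin_cases b
      · exact fun h => huC ⟨a, h⟩
      · exact fun h => hvC ⟨a, h⟩
  · have hvadj' : ∀ a, ¬ G.Adj (f a) v := fun a h => hvadj a h.symm
    rintro (a | a) (b | b)
    · have : (cycleGraph k).Adj a b → a ≠ b := fun h => h.ne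
      simp only [Function.Embedding.coeFn_mk, Sum.elim_inl, hf, oddTorch, fromRel_adj, ne_eq,
        Sum.inl.injEq, (cycleGraph k).adj_comm b a]
      tauto
    · fin_cases b <;> simp [oddTorch, hvadj', G.adj_comm]
    · fin_cases a <;> simp [oddTorch, hvadj]
    · fin_cases a <;> fin_cases b <;> simp [oddTorch, hvu, hvu.symm]

/-- Every (odd torch, C₃)-free graph is 3-colorable. -/
theorem oddTorch_C3_free_three_colorable {V : Type*} [Fintype V] (G : SimpleGraph V)
    (htorch : OddTorchFree G) (hC3 : IsFree G (SimpleGraph.cycleGraph 3)) :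
    G.Colorable 3 := by
  classical
  -- The root of the connected component of a vertex.
  let r : V → V := fun x => (G.connectedComponentMk x).out
  have hr : ∀ x, G.Reachable (r x) x := fun x =>
    ConnectedComponent.exact (Quot.out_eq (G.connectedComponentMk x))
  have hreq : ∀ {x y}, G.Reachable x y → r x = r y := fun h =>
    congrArg Quot.out (ConnectedComponent.sound h)
  have hbip : (G.induce {x | ¬ G.Adj (r x) x}).Colorable 2 := by
    by_contra hno
    obtain ⟨k, g, hk, hodd, hg⟩ := exists_induced_odd_cycle hno
    let f : Fin k ↪ V := g.trans (Function.Embedding.subtype _)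
    have hf : ∀ a b, G.Adj (f a) (f b) ↔ (cycleGraph k).Adj a b := hg
    have hk3 : k ≠ 3 := by
      rintro rfl
      exact hC3 ⟨f, hf⟩
    have hk5 : 5 ≤ k := by
      obtain ⟨m, rfl⟩ := hodd
      omega
    have hconn : ∀ a b, r (f a) = r (f b) := fun a b => by
      obtain ⟨w⟩ := cycleGraph_preconnected a b
      let φ : cycleGraph k →g G := ⟨f, fun {a b} h => (hf a b).mpr h⟩
      exact hreq ⟨w.map φ⟩
    have hnadj : ∀ a b, ¬ G.Adj (r (f a)) (f b) := fun a b => by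
      rw [hconn a b]
      exact (g b).2
    have i : Fin k := ⟨0, by omega⟩
    refine not_reachable_hole htorch hC3 f hk5 hodd hf (r := r (f i)) ?_ (hnadj i) i (hr _)
    -- A root on the hole would be adjacent to its successor there.
    rintro ⟨a, ha⟩
    obtain ⟨b, hb⟩ : ∃ b, (cycleGraph k).Adj a b := by
      obtain ⟨n, rfl⟩ : ∃ n, k = n + 2 := ⟨k - 2, by omega⟩
      exact ⟨a + 1, by simp [cycleGraph_adj]⟩
    exact hnadj i b (ha ▸ (hf a b).mpr hb)
  obtain ⟨c⟩ := hbip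
  refine ⟨Coloring.mk
    (fun x => if h : G.Adj (r x) x then 2 else (c ⟨x, h⟩).castSucc) ?_⟩
  intro x y hxy
  have hrxy : r x = r y := hreq hxy.reachable
  by_cases hx : G.Adj (r x) x <;> by_cases hy : G.Adj (r y) y
  · exact (triangle_free hC3 hx hxy (hrxy ▸ hy)).elim
  · simp only [hx, hy, dite_true, dite_false]
    exact (Fin.castSucc_lt_last _).ne'
  · simp only [hx, hy, dite_true, dite_false]
    exact (Fin.castSucc_lt_last _).ne
  · simp only [hx, hy, dite_false]
    intro he
    exact c.valid (show (G.induce {x | ¬ G.Adj (r x) x}).Adj ⟨x, hx⟩ ⟨y, hy⟩ from hxy)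
      (Fin.castSucc_injective _ he)
end

section
/- Let G be a triangle-free graph. Then the following three statements are equivalent: (i) χ(G) ≤ 3; (ii) G is perfectly weight divisible; (iii) G is perfectly divisible. -/
/-!
In a triangle-free graph the perfect induced subgraphs are the bipartite ones: a 2-colourable graph
is perfect (`isPerfect_of_colorable_two`), and a perfect graph of clique number at most `2` is
2-colourable.

* If `G` has a 3-colouring `c`, then for an induced subgraph `H` let `W` consist of the vertices
  of the third colour that are not isolated in `H`, and let `P` be the rest. Isolated vertices can
  be recoloured freely, so `H[P]` is bipartite. A clique of `H[W]` has at most one vertex, and this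
  vertex lies on an edge of `H`, which has strictly larger weight
  (`perfectlyWeightDivisible_of_colorable_three`).
* Constant weight `1` turns weight divisibility into divisibility.
* If `G` is perfectly divisible, split `V(G)` as `A ∪ B`. Since `ω(G) ≤ 2`, the set `B` is stable
  and `G[A]` is 2-colourable, so `G` is 3-colourable (`colorable_three_of_perfectlyDivisible`).
-/

open SimpleGraph

lemma card_le_cliqueNumOn {V : Type*} [Finite V] (G : SimpleGraph V) {s : Set V} {t : Finset V}
    (hts : (↑t : Set V) ⊆ s) (ht : G.IsClique (↑t : Set V)) : t.card ≤ cliqueNumOn G s := by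
  have := Fintype.ofFinite V
  refine le_csSup ⟨Fintype.card V, ?_⟩ ⟨t, hts, ht, rfl⟩
  rintro n ⟨u, -, hu⟩
  exact hu.card_eq ▸ u.card_le_univ

lemma cliqueNumOn_le {V : Type*} (G : SimpleGraph V) {s : Set V} {k : ℕ}
    (h : ∀ t : Finset V, (↑t : Set V) ⊆ s → G.IsClique (↑t : Set V) → t.card ≤ k) :
    cliqueNumOn G s ≤ k := by
  refine csSup_le ⟨0, ∅, by simp⟩ ?_
  rintro n ⟨u, hus, hu⟩
  exact hu.card_eq ▸ h u hus hu.isClique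

lemma sum_le_wCliqueNumOn {V : Type*} [Finite V] (G : SimpleGraph V) (w : V → ℕ) {s : Set V}
    {t : Finset V} (hts : (↑t : Set V) ⊆ s) (ht : G.IsClique (↑t : Set V)) :
    ∑ v ∈ t, w v ≤ wCliqueNumOn G w s := by
  have := Fintype.ofFinite V
  refine le_csSup ⟨∑ v, w v, ?_⟩ ⟨t, hts, ht, rfl⟩
  rintro n ⟨u, -, -, rfl⟩
  exact Finset.sum_le_sum_of_subset u.subset_univ

lemma wCliqueNumOn_lt {V : Type*} [Finite V] (G : SimpleGraph V) (w : V → ℕ) {s : Set V} {k : ℕ}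
    (h : ∀ t : Finset V, (↑t : Set V) ⊆ s → G.IsClique (↑t : Set V) → ∑ v ∈ t, w v < k) :
    wCliqueNumOn G w s < k := by
  have hk : 0 < k := by simpa using h ∅ (by simp) (by simp)
  refine Nat.lt_of_le_pred hk (csSup_le ⟨0, ∅, by simp⟩ ?_)
  rintro n ⟨u, hus, hu, rfl⟩
  exact Nat.le_pred_of_lt (h u hus hu)

lemma wCliqueNumOn_one {V : Type*} (G : SimpleGraph V) (s : Set V) :
    wCliqueNumOn G (fun _ => 1) s = cliqueNumOn G s := by
  simp [wCliqueNumOn, cliqueNumOn, SimpleGraph.isNClique_iff]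

lemma isClique_pair {V : Type*} [DecidableEq V] {G : SimpleGraph V} {a b : V} (h : G.Adj a b) :
    G.IsClique (↑({a, b} : Finset V) : Set V) := by
  rw [Finset.coe_pair, SimpleGraph.isClique_pair]
  exact fun _ => h

lemma isPerfect_of_colorable_two {V : Type*} [Finite V] (G : SimpleGraph V) (h : G.Colorable 2) :
    IsPerfect G := by
  classical
  intro s
  have h2 : (G.induce s).Colorable 2 := h.of_hom (SimpleGraph.Embedding.induce s).toHom
  refine le_antisymm ?_ ?_
  · -- The clique number is `2`, `1` or `0` according to whether `G[s]` has an edge, is edgeless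
    -- but nonempty, or is empty; in each case there is a colouring with that many colours.
    by_cases he : ∃ a ∈ s, ∃ b ∈ s, G.Adj a b
    · obtain ⟨a, ha, b, hb, hab⟩ := he
      have : 2 ≤ cliqueNumOn G s := by
        rw [← Finset.card_pair hab.ne]
        exact card_le_cliqueNumOn G (by simp [Set.insert_subset_iff, ha, hb]) (isClique_pair hab)
      exact h2.chromaticNumber_le.trans (by exact_mod_cast this)
    · push Not at he
      rcases s.eq_empty_or_nonempty with rfl | ⟨a, ha⟩
      · simp [SimpleGraph.chromaticNumber_eq_zero_of_isEmpty]
      · have : 1 ≤ cliqueNumOn G s := by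
          rw [← Finset.card_singleton a]
          exact card_le_cliqueNumOn G (by simpa using ha) (by simp)
        have h1 : (G.induce s).Colorable 1 :=
          ⟨SimpleGraph.Coloring.mk (fun _ => 0) fun {u v} huv =>
            (he u u.2 v v.2 huv).elim⟩
        exact h1.chromaticNumber_le.trans (by exact_mod_cast this)
  · refine SimpleGraph.le_chromaticNumber_iff_colorable.2 fun n hn => ?_
    refine cliqueNumOn_le G fun t hts ht => ?_
    have hc : (G.induce s).IsClique (↑(t.subtype (· ∈ s)) : Set s) := by
      intro a ha b hb hab
      exact ht (by simpa using ha) (by simpa using hb) (fun h => hab (Subtype.ext h))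
    have := hc.card_le_of_colorable hn
    rwa [Finset.card_subtype, Finset.filter_true_of_mem (fun x hx => hts hx)] at this

lemma perfectlyWeightDivisible_of_colorable_three {V : Type*} [Finite V] (G : SimpleGraph V)
    (h : G.Colorable 3) : PerfectlyWeightDivisible G := by
  classical
  obtain ⟨c⟩ := h
  intro w hw s ⟨x, hx⟩
  set W : Set V := {v | v ∈ s ∧ c v = 2 ∧ ∃ u ∈ s, G.Adj v u} with hW
  refine ⟨s \ W, W, Set.sdiff_union_of_subset fun v hv => hv.1, by simp, ?_, ?_⟩
  · refine isPerfect_of_colorable_two _ ⟨SimpleGraph.Coloring.mk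
      (fun v => if c v.1 = 0 then (0 : Fin 2) else 1) ?_⟩
    rintro ⟨u, hu, huW⟩ ⟨v, hv, hvW⟩ huv
    have huv : G.Adj u v := huv
    have hcu : c u ≠ 2 := fun h => huW ⟨hu, h, v, hv, huv⟩
    have hcv : c v ≠ 2 := fun h => hvW ⟨hv, h, u, hu, huv.symm⟩
    have hne := c.valid huv
    dsimp only
    generalize c u = i at *
    generalize c v = j at *
    revert i j
    decide
  · refine wCliqueNumOn_lt G w fun t htW ht => ?_
    rcases t.eq_empty_or_nonempty with rfl | ⟨v, hv⟩
    · have hle := sum_le_wCliqueNumOn G w (s := s) (t := {x}) (by simpa using hx) (by simp)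
      have := hw x
      rw [Finset.sum_empty]
      rw [Finset.sum_singleton] at hle
      omega
    · have htv : t = {v} := by
        refine Finset.eq_singleton_iff_unique_mem.2 ⟨hv, fun u hu => ?_⟩
        by_contra hne
        exact c.valid (ht hu hv hne) ((htW hu).2.1.trans (htW hv).2.1.symm)
      obtain ⟨hvs, -, u, hus, hvu⟩ := htW hv
      have := sum_le_wCliqueNumOn G w (s := s) (t := {v, u})
        (by simp [Set.insert_subset_iff, hvs, hus]) (isClique_pair hvu)
      rw [Finset.sum_pair hvu.ne] at this
      have := hw u
      rw [htv, Finset.sum_singleton]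
      omega

lemma cliqueFree_three_of_isFree {V : Type*} (G : SimpleGraph V)
    (htf : IsFree G (SimpleGraph.cycleGraph 3)) : G.CliqueFree 3 := by
  by_contra h
  have f := SimpleGraph.topEmbeddingOfNotCliqueFree h
  refine htf ⟨f.toEmbedding, fun a b => ?_⟩
  rw [SimpleGraph.cycleGraph_three_eq_top]
  exact f.map_adj_iff

lemma colorable_three_of_perfectlyDivisible {V : Type*} [Finite V] (G : SimpleGraph V)
    (htf : G.CliqueFree 3) (h : PerfectlyDivisible G) : G.Colorable 3 := by
  classical
  have hcard : ∀ t : Finset V, G.IsClique (↑t : Set V) → t.card ≤ 2 := by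
    intro t ht
    by_contra! hlt
    exact htf.mono hlt t ⟨ht, rfl⟩
  rcases isEmpty_or_nonempty V with hV | hV
  · exact SimpleGraph.Colorable.of_isEmpty 3
  obtain ⟨A, B, hAB, -, hA, hB⟩ := h Set.univ Set.univ_nonempty
  have hB1 : cliqueNumOn G B < 2 := hB.trans_le (cliqueNumOn_le G fun t _ ht => hcard t ht)
  have hstable : ∀ u ∈ B, ∀ v ∈ B, ¬ G.Adj u v := by
    intro u hu v hv huv
    have := card_le_cliqueNumOn G (s := B) (t := {u, v})
      (by simp [Set.insert_subset_iff, hu, hv]) (isClique_pair huv)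
    rw [Finset.card_pair huv.ne] at this
    omega
  have hA2 : (G.induce A).Colorable 2 := by
    have hle : cliqueNumOn (G.induce A) Set.univ ≤ 2 := by
      refine cliqueNumOn_le _ fun t _ ht => ?_
      rw [← Finset.card_map (Function.Embedding.subtype (· ∈ A))]
      refine hcard _ ?_
      rintro a ha b hb hab
      simp only [Finset.coe_map, Function.Embedding.subtype_apply, Set.mem_image,
        Finset.mem_coe] at ha hb
      obtain ⟨a, ha, rfl⟩ := ha
      obtain ⟨b, hb, rfl⟩ := hb
      exact ht ha hb (fun h => hab (congrArg _ h))
    have : ((G.induce A).induce Set.univ).Colorable 2 := by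
      rw [← SimpleGraph.chromaticNumber_le_iff_colorable, hA Set.univ]
      exact_mod_cast hle
    exact this.of_hom (SimpleGraph.induceUnivIso (G.induce A)).symm.toHom
  obtain ⟨c⟩ := hA2
  refine ⟨SimpleGraph.Coloring.mk
    (fun v => if hv : v ∈ A then (c ⟨v, hv⟩).castSucc else Fin.last 2) ?_⟩
  intro u v huv
  have hmem : ∀ x, x ∉ A → x ∈ B := fun x hx =>
    ((hAB ▸ Set.mem_univ x : x ∈ A ∪ B)).resolve_left hx
  by_cases hu : u ∈ A <;> by_cases hv : v ∈ A
  · have : c ⟨u, hu⟩ ≠ c ⟨v, hv⟩ := c.valid huv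
    simpa [hu, hv] using this
  · simp only [hu, hv, dite_true, dite_false]
    exact Fin.castSucc_ne_last _
  · simp only [hu, hv, dite_true, dite_false]
    exact (Fin.castSucc_ne_last _).symm
  · exact (hstable u (hmem u hu) v (hmem v hv) huv).elim

/-- For a triangle-free graph `G`, the following are equivalent: (i) `χ(G) ≤ 3`;
(ii) `G` is perfectly weight divisible; (iii) `G` is perfectly divisible. -/
theorem triangleFree_tfae {V : Type*} [Fintype V] (G : SimpleGraph V)
    (htf : IsFree G (SimpleGraph.cycleGraph 3)) :
    (G.Colorable 3 ↔ PerfectlyWeightDivisible G) ∧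
    (PerfectlyWeightDivisible G ↔ PerfectlyDivisible G) := by
  have h12 := perfectlyWeightDivisible_of_colorable_three G
  have h23 : PerfectlyWeightDivisible G → PerfectlyDivisible G := fun h => by
    simpa only [PerfectlyDivisible, wCliqueNumOn_one] using h (fun _ => 1) fun _ => one_pos
  have h31 := colorable_three_of_perfectlyDivisible G (cliqueFree_three_of_isFree G htf)
  exact ⟨⟨h12, fun h => h31 (h23 h)⟩, ⟨h23, fun h => h12 (h31 h)⟩⟩
end

section
/- Let G be a connected, locally perfect, bull-free graph and let v be a vertex of G. Then the subgraph of G induced on M(v) = V(G)∖(N(v)∪{v}) does not contain an odd antihole with at least 7 vertices. -/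
/-!
Let `A` be an antihole on `k ≥ 7` vertices, `k` odd, lying in `M(v)`. On a walk from `v` to `A`, which
exists by connectedness, some edge `yx` leaves the set of vertices that neither lie in `A` nor have
a neighbour in `A` (`y` is in that set, `x` is not), so `x` has a neighbour in `A`.
The antihole `A` is not perfect: its colour classes have size at most two, its cliques have size at
most `k / 2`, and `k` is odd (`not_complete_to_oddAntihole`). Since `N(x)` is perfect, `x` is not
complete to `A`, so going around the cycle there are consecutive vertices `q`, `r` of the
complementary cycle with `x` not adjacent to `q` and adjacent to `r`
(`exists_boundary`). In the window `p, q, r, s, t, u` of six consecutive vertices of that cycle,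
which induces the complement of a path because `k ≥ 7`, the vertices `x` and `y` always yield a
bull (`bull_of_window`).
-/

open SimpleGraph

/-! ### Forcing a bull -/

/-- A bull with triangle `a, b, c` and pendant edges `a d`, `b e` cannot occur in a bull-free
graph. The five vertices are distinct as a consequence of the adjacencies. -/
lemma no_bull {V : Type*} {G : SimpleGraph V} (hbull : IsFree G bull) {a b c d e : V}
    (hab : G.Adj a b) (hac : G.Adj a c) (hbc : G.Adj b c) (had : G.Adj a d) (hbe : G.Adj b e)
    (hae : ¬ G.Adj a e) (hbd : ¬ G.Adj b d) (hcd : ¬ G.Adj c d) (hce : ¬ G.Adj c e)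
    (hde : ¬ G.Adj d e) : False := by
  have hadj : ∀ i j, G.Adj (![a, b, c, d, e] i) (![a, b, c, d, e] j) ↔ bull.Adj i j := by
    intro i j
    fin_cases i <;> fin_cases j <;>
      simp [bull, hab, hac, hbc, had, hbe, hae, hbd, hcd, hce, hde, hab.symm, hac.symm, hbc.symm,
        had.symm, hbe.symm, G.adj_comm e a, G.adj_comm d b, G.adj_comm d c, G.adj_comm e c,
        G.adj_comm e d]
  refine hbull ⟨⟨![a, b, c, d, e], ?_⟩, hadj⟩
  -- No two vertices of the bull have the same neighbourhood.
  intro i j hij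
  have key : ∀ l, bull.Adj i l ↔ bull.Adj j l := fun l => by rw [← hadj, ← hadj, hij]
  revert key
  fin_cases i <;> fin_cases j <;> simp [bull, Fin.forall_fin_succ]

/-- Six vertices inducing the complement of the path `p q r s t u`, a vertex `y` with no neighbour
among them, and a neighbour `x` of `y` that is adjacent to `r` but not to `q`, force a bull. -/
lemma bull_of_window {V : Type*} {G : SimpleGraph V} (hbull : IsFree G bull)
    {x y p q r s t u : V}
    (pq : ¬ G.Adj p q) (qr : ¬ G.Adj q r) (rs : ¬ G.Adj r s) (st : ¬ G.Adj s t)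
    (pr : G.Adj p r) (ps : G.Adj p s) (pt : G.Adj p t) (pu : G.Adj p u)
    (qt : G.Adj q t) (qu : G.Adj q u) (rt : G.Adj r t) (ru : G.Adj r u)
    (xy : G.Adj x y) (yp : ¬ G.Adj y p) (yq : ¬ G.Adj y q) (yr : ¬ G.Adj y r)
    (ys : ¬ G.Adj y s) (yt : ¬ G.Adj y t) (yu : ¬ G.Adj y u)
    (xq : ¬ G.Adj x q) (xr : G.Adj x r) : False := by
  have sym : ∀ {a b}, ¬ G.Adj a b → ¬ G.Adj b a := fun h h' => h h'.symm
  -- If `x` is adjacent to `a` and `b`, with `a` adjacent to `b`, then a non-neighbour `c` of `x`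
  -- cannot be adjacent to `a` and not to `b`: otherwise `y` and `c` are the ends of a bull.
  have key : ∀ {a b c}, G.Adj a b → G.Adj a c → ¬ G.Adj b c → ¬ G.Adj y a → ¬ G.Adj y b →
      ¬ G.Adj y c → ¬ G.Adj x c → G.Adj x a → G.Adj x b → False :=
    fun ab ac bc ya yb yc xc xa xb =>
      no_bull hbull xa xb ab xy ac xc (sym ya) (sym yb) bc yc
  have xu : ¬ G.Adj x u := fun h => key ru.symm qu.symm (sym qr) yu yr yq xq h xr
  have xt : ¬ G.Adj x t := fun h => key rt.symm qt.symm (sym qr) yt yr yq xq h xr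
  have xp : ¬ G.Adj x p := by
    intro xp
    by_cases xs : G.Adj x s
    · exact key ps pt st yp ys yt xt xp xs
    · exact key pr ps rs yp yr ys xs xp xr
  exact no_bull hbull ru pr.symm pu.symm xr.symm qu.symm (sym qr) (sym xu) (sym xp) pq xq

/-! ### Odd antiholes are not perfect -/

/-- A cycle on at least seven vertices is triangle-free: among three distinct vertices, two are
adjacent in the complement. -/
lemma compl_cycle_of_three {n : ℕ} {a b c : Fin (n + 7)} (hab : a ≠ b) (hac : a ≠ c)
    (hbc : b ≠ c) :
    (cycleGraph (n + 7))ᶜ.Adj a b ∨ (cycleGraph (n + 7))ᶜ.Adj a c ∨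
      (cycleGraph (n + 7))ᶜ.Adj b c := by
  simp only [compl_adj, cycleGraph_adj]
  have h1 : (1 : Fin (n + 7)) ≠ 0 := by simp
  have h3 : (1 : Fin (n + 7)) + 1 + 1 ≠ 0 := by
    simp [Fin.ext_iff, Fin.val_add, Nat.mod_eq_of_lt (show 3 < n + 7 by omega)]
  open Fin.CommRing in grind

/-- A locally perfect graph has no vertex complete to an odd antihole. -/
lemma not_complete_to_oddAntihole {V : Type*} [Fintype V] {G : SimpleGraph V}
    (hlp : LocallyPerfect G) {n : ℕ} (hodd : Odd (n + 7)) (f : Fin (n + 7) ↪ V)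
    (hf : ∀ a b, G.Adj (f a) (f b) ↔ (cycleGraph (n + 7))ᶜ.Adj a b) (x : V)
    (hx : ∀ i, G.Adj x (f i)) : False := by
  classical
  let g : Fin (n + 7) → G.neighborSet x := fun i => ⟨f i, hx i⟩
  have hperf := hlp x (Set.range g)
  set ω := cliqueNumOn (G.induce (G.neighborSet x)) (Set.range g) with hω
  -- A colouring with `ω` colours has classes of size at most two.
  have h1 : n + 7 ≤ 2 * ω := by
    obtain ⟨C⟩ := chromaticNumber_le_iff_colorable.1 hperf.le
    let c : Fin (n + 7) → Fin ω := fun i => C ⟨g i, i, rfl⟩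
    by_contra hlt
    obtain ⟨col, -, hcol⟩ := Finset.exists_lt_card_fiber_of_mul_lt_card_of_maps_to
      (s := Finset.univ) (t := Finset.univ) (f := c) (n := 2) (fun _ _ => Finset.mem_univ _)
      (by simpa [mul_comm] using hlt)
    obtain ⟨a, b, d, ha, hb, hd, hab, had, hbd⟩ := Finset.two_lt_card_iff.1 hcol
    simp only [Finset.mem_filter, Finset.mem_univ, true_and] at ha hb hd
    have valid : ∀ i j, (cycleGraph (n + 7))ᶜ.Adj i j → c i ≠ c j := fun i j hij =>
      C.valid (show G.Adj (f i) (f j) from (hf i j).2 hij)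
    rcases compl_cycle_of_three hab had hbd with h | h | h
    · exact valid _ _ h (ha.trans hb.symm)
    · exact valid _ _ h (ha.trans hd.symm)
    · exact valid _ _ h (hb.trans hd.symm)
  -- A clique `t` is disjoint from its shift by one step along the cycle.
  have h2 : 2 * ω ≤ n + 7 := by
    have hmem : ω ∈ {m | ∃ t : Finset (G.neighborSet x), ↑t ⊆ Set.range g ∧
        (G.induce (G.neighborSet x)).IsNClique m t} := by
      refine Nat.sSup_mem ⟨0, ∅, by simp, by simp [isNClique_empty]⟩ ⟨Fintype.card V, ?_⟩
      rintro m ⟨t, -, ht⟩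
      rw [← ht.card_eq]
      exact (Finset.card_le_univ t).trans (Fintype.card_subtype_le _)
    obtain ⟨t, htr, ht⟩ := hmem
    have ginj : Function.Injective g := fun i j h => f.injective (congrArg Subtype.val h)
    let T : Finset (Fin (n + 7)) := Finset.univ.filter fun i => g i ∈ t
    have hT : T.image g = t := by
      ext z
      constructor
      · simp only [Finset.mem_image, T, Finset.mem_filter, Finset.mem_univ, true_and]
        rintro ⟨i, hi, rfl⟩
        exact hi
      · intro hz
        obtain ⟨i, rfl⟩ := htr hz
        exact Finset.mem_image_of_mem _ (by simpa [T] using hz)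
    have hcard : T.card = ω := by
      rw [← ht.card_eq, ← hT, Finset.card_image_of_injective _ ginj]
    let T' : Finset (Fin (n + 7)) := T.image (· + 1)
    have hcard' : T'.card = ω := by
      rw [← hcard]
      exact Finset.card_image_of_injective _ (add_left_injective 1)
    have hdisj : Disjoint T T' := by
      rw [Finset.disjoint_left]
      intro i hi hi'
      obtain ⟨j, hj, rfl⟩ := Finset.mem_image.1 hi'
      simp only [T, Finset.mem_filter, Finset.mem_univ, true_and] at hi hj
      have hne : g (j + 1) ≠ g j := fun h => by simpa using ginj h
      have hadj : G.Adj (f (j + 1)) (f j) := ht.isClique hi hj hne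
      rw [hf, compl_adj, cycleGraph_adj] at hadj
      exact hadj.2 (Or.inl (by simp))
    have := Finset.card_le_univ (T ∪ T')
    rw [Finset.card_union_of_disjoint hdisj, hcard, hcard', Fintype.card_fin] at this
    omega
  obtain ⟨m, hm⟩ := hodd
  omega

/-! ### Walking around the cycle -/

/-- Going around a cycle, a property that holds somewhere but not everywhere switches from false
to true at some step. -/
lemma exists_boundary {n : ℕ} {P : Fin (n + 7) → Prop} {i j : Fin (n + 7)} (hi : ¬ P i)
    (hj : P j) : ∃ l, ¬ P l ∧ P (l + 1) := by
  by_contra! h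
  have hdown : ∀ m : ℕ, P (j - Fin.ofNat (n + 7) m) := by
    intro m
    induction m with
    | zero => simpa using hj
    | succ m ih =>
      by_contra hm
      refine h _ hm ?_
      convert ih using 1
      have : Fin.ofNat (n + 7) (m + 1) = Fin.ofNat (n + 7) m + 1 := by
        simp [Fin.ext_iff, Fin.val_add]
      rw [this]
      abel
  apply hi
  simpa using hdown (j - i).val

/-- Adjacency in the complement of a cycle, for two vertices of a window of six consecutive
vertices. -/
lemma compl_cycle_window {n : ℕ} (l : Fin (n + 7)) {c d : ℕ} (hcd : c < d) (hd : d < c + 6) :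
    (cycleGraph (n + 7))ᶜ.Adj (l + Fin.ofNat _ c) (l + Fin.ofNat _ d) ↔ d ≠ c + 1 := by
  obtain ⟨e, rfl⟩ := Nat.exists_eq_add_of_lt hcd
  have hsum : Fin.ofNat (n + 7) (c + e + 1) = Fin.ofNat _ c + Fin.ofNat _ (e + 1) := by
    simp [Fin.ext_iff, Fin.val_add, add_assoc]
  have hlt : e + 1 < n + 7 := by omega
  have hval : (Fin.ofNat (n + 7) (e + 1)).val = e + 1 := by simp [Nat.mod_eq_of_lt hlt]
  have hz : Fin.ofNat (n + 7) (e + 1) ≠ 0 := by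
    intro h; rw [h] at hval; simp at hval
  have hneg : -Fin.ofNat (n + 7) (e + 1) ≠ 1 := by
    intro h
    have h' : Fin.ofNat (n + 7) (e + 1) + 1 = 0 := by rw [← h]; abel
    have := congrArg Fin.val h'
    rw [Fin.val_add, hval] at this
    simp only [Fin.val_one, Fin.val_zero] at this
    rw [Nat.mod_eq_of_lt (by omega)] at this
    omega
  have hone : Fin.ofNat (n + 7) (e + 1) = 1 ↔ e = 0 := by
    rw [Fin.ext_iff, hval]; simp
  rw [compl_adj, cycleGraph_adj, hsum, ← add_assoc]
  set z := Fin.ofNat (n + 7) (e + 1)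
  set w := l + Fin.ofNat (n + 7) c
  have e1 : w - (w + z) = -z := by abel
  have e2 : w + z - w = z := by abel
  rw [e1, e2, hone]
  constructor
  · rintro ⟨-, h⟩ he
    exact h (Or.inr (by omega))
  · intro h
    refine ⟨fun h' => hz (by simpa using h'.symm), ?_⟩
    rintro (h' | h')
    · exact hneg h'
    · omega

/-! ### Odd antiholes in non-neighbourhoods -/

/-- For a connected, locally perfect, bull-free graph `G` and a vertex `v`, the subgraph
induced on `M(v) = V(G) ∖ (N(v) ∪ {v})` contains no odd antihole with at least 7 vertices. -/
theorem no_oddAntihole_in_nonNeighborhood {V : Type*} [Fintype V] (G : SimpleGraph V)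
    (hconn : G.Connected) (hlp : LocallyPerfect G) (hbull : IsFree G bull) (v : V) :
    ∀ k : ℕ, 7 ≤ k → Odd k →
      IsFree (G.induce ((G.neighborSet v ∪ {v})ᶜ)) ((SimpleGraph.cycleGraph k)ᶜ) := by
  rintro k hk hodd ⟨f', hf'⟩
  obtain ⟨n, rfl⟩ := Nat.exists_eq_add_of_le' hk
  let f : Fin (n + 7) ↪ V := f'.trans (Function.Embedding.subtype _)
  have hf : ∀ a b, G.Adj (f a) (f b) ↔ (cycleGraph (n + 7))ᶜ.Adj a b := hf'
  have hv : ∀ i, f i ≠ v ∧ ¬ G.Adj v (f i) := by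
    intro i
    have := (f' i).2
    simp only [Set.mem_compl_iff, Set.mem_union, Set.mem_singleton_iff, mem_neighborSet,
      not_or] at this
    exact ⟨this.2, this.1⟩
  let M : Set V := {z | ∀ i, f i ≠ z ∧ ¬ G.Adj z (f i)}
  obtain ⟨w⟩ := hconn.preconnected v (f 0)
  obtain ⟨d, -, hy, hx⟩ := w.exists_boundary_dart M hv (fun h => (h 0).1 rfl)
  obtain ⟨⟨y, x⟩, hyx⟩ := d
  simp only at hy hx hyx
  have hyx : G.Adj y x := hyx
  obtain ⟨j, hj⟩ : ∃ j, G.Adj x (f j) := by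
    by_contra! h
    refine hx fun i => ⟨?_, h i⟩
    rintro rfl
    exact (hy i).2 hyx
  obtain ⟨i, hi⟩ : ∃ i, ¬ G.Adj x (f i) := by
    by_contra! h
    exact not_complete_to_oddAntihole hlp hodd f hf x h
  obtain ⟨l, hl, hl'⟩ := exists_boundary (P := fun i => G.Adj x (f i)) hi hj
  -- The window starts one step before `l`, so that `q = f l` and `r = f (l + 1)`.
  let h : ℕ → V := fun c => f (l - 1 + Fin.ofNat _ c)
  have hq : h 1 = f l := by
    have : Fin.ofNat (n + 7) 1 = 1 := rfl
    simp only [h, this, sub_add_cancel]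
  have hr : h 2 = f (l + 1) := by
    have : Fin.ofNat (n + 7) 2 = 1 + 1 := by simp [Fin.ext_iff, Fin.val_add]
    simp only [h, this]
    congr 1
    abel
  have adj : ∀ c d, c + 1 < d → d < c + 6 → G.Adj (h c) (h d) := fun c d hc hd =>
    (hf _ _).2 ((compl_cycle_window _ (by omega) hd).2 (by omega))
  have nadj : ∀ c, ¬ G.Adj (h c) (h (c + 1)) := fun c hc =>
    (compl_cycle_window _ (by omega) (by omega)).1 ((hf _ _).1 hc) rfl
  have hyh : ∀ c, ¬ G.Adj y (h c) := fun c => (hy _).2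
  exact bull_of_window hbull (p := h 0) (q := h 1) (r := h 2) (s := h 3) (t := h 4) (u := h 5)
    (nadj 0) (nadj 1) (nadj 2) (nadj 3)
    (adj _ _ (by omega) (by omega)) (adj _ _ (by omega) (by omega))
    (adj _ _ (by omega) (by omega)) (adj _ _ (by omega) (by omega))
    (adj _ _ (by omega) (by omega)) (adj _ _ (by omega) (by omega))
    (adj _ _ (by omega) (by omega)) (adj _ _ (by omega) (by omega))
    hyx.symm (hyh _) (hyh _) (hyh _) (hyh _) (hyh _) (hyh _)
    (by rwa [hq]) (by rwa [hr])
end
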